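/- arXiv:1707.01528 — 4 statements merged into one kernel-verified Lean document; each statement's English description precedes it below -/
import Mathlib

section
/- Elliptic Gibbons–Tsarev compatibility identity (Section 4): Let σ lie in the complex upper half-plane and let u, x, y ∈ ℂ be such that none of the points x, y, x−y, u+x, u+y lies in the lattice ℤ + σℤ. Then [℘₁(u+y,σ) − ℘₁(y,σ)]·[ζ₁(x−y,σ) − ζ₁(x,σ)] − [℘₁(u+x,σ) − ℘₁(x,σ)]·[ζ₁(y−x,σ) − ζ₁(y,σ)] + 2℘₁(y−x,σ)·[−ζ₁(u+y,σ) + ζ₁(y,σ) + ζ₁(u+x,σ) − ζ₁(x,σ)] + (1/2)[℘₁'(u+y,σ) − ℘₁'(u+x,σ) − ℘₁'(y,σ) + ℘₁'(x,σ)] + [ζ₁(u+y,σ) − ζ₁(u+x,σ) + ζ₁(x,σ)]·℘₁(u+y,σ) − [ζ₁(u+x,σ) − ζ₁(u+y,σ) + ζ₁(y,σ)]·℘₁(u+x,σ) − ζ₁(y,σ)℘₁(y,σ) + ζ₁(x,σ)℘₁(x,σ) = 0. (With x = ξ_j, y = ξ_k and σ = τ/2, this identity expresses the vanishing of F_{jk}(u),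 i.e., the compatibility of the system of elliptic Löwner equations under the elliptic Gibbons–Tsarev system.) -/
open Complex

/-- Jacobi theta function θ₁(u,τ). -/
noncomputable def theta1 (u τ : ℂ) : ℂ :=
  -∑' k : ℤ, Complex.exp ((Real.pi : ℂ) * Complex.I * τ * ((k : ℂ) + 1/2)^2
      + 2 * (Real.pi : ℂ) * Complex.I * (u + 1/2) * ((k : ℂ) + 1/2))

/-- Jacobi theta function θ₂(u,τ). -/
noncomputable def theta2 (u τ : ℂ) : ℂ :=
  ∑' k : ℤ, Complex.exp ((Real.pi : ℂ) * Complex.I * τ * ((k : ℂ) + 1/2)^2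
      + 2 * (Real.pi : ℂ) * Complex.I * u * ((k : ℂ) + 1/2))

/-- Jacobi theta function θ₃(u,τ). -/
noncomputable def theta3 (u τ : ℂ) : ℂ :=
  ∑' k : ℤ, Complex.exp ((Real.pi : ℂ) * Complex.I * τ * (k : ℂ)^2
      + 2 * (Real.pi : ℂ) * Complex.I * u * (k : ℂ))

/-- Jacobi theta function θ₄(u,τ). -/
noncomputable def theta4 (u τ : ℂ) : ℂ :=
  ∑' k : ℤ, Complex.exp ((Real.pi : ℂ) * Complex.I * τ * (k : ℂ)^2
      + 2 * (Real.pi : ℂ) * Complex.I * (u + 1/2) * (k : ℂ))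

/-- ζ_a(u,τ) = θ_a'(u,τ)/θ_a(u,τ). -/
noncomputable def zeta1 (u τ : ℂ) : ℂ := deriv (fun v => theta1 v τ) u / theta1 u τ
noncomputable def zeta2 (u τ : ℂ) : ℂ := deriv (fun v => theta2 v τ) u / theta2 u τ
noncomputable def zeta3 (u τ : ℂ) : ℂ := deriv (fun v => theta3 v τ) u / theta3 u τ
noncomputable def zeta4 (u τ : ℂ) : ℂ := deriv (fun v => theta4 v τ) u / theta4 u τ

/-- ℘_a(u,τ) = −∂_u ζ_a(u,τ). -/
noncomputable def wp1 (u τ : ℂ) : ℂ := -deriv (fun v => zeta1 v τ) u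
noncomputable def wp2 (u τ : ℂ) : ℂ := -deriv (fun v => zeta2 v τ) u
noncomputable def wp1' (u τ : ℂ) : ℂ := deriv (fun v => wp1 v τ) u
noncomputable def wp2' (u τ : ℂ) : ℂ := deriv (fun v => wp2 v τ) u

/-- S'(u,τ) = ζ₁(u,τ) − ζ₄(u,τ). -/
noncomputable def Sp (u τ : ℂ) : ℂ := zeta1 u τ - zeta4 u τ
/-- S''(u,τ) = ∂_u S'(u,τ). -/
noncomputable def Spp (u τ : ℂ) : ℂ := deriv (fun v => Sp v τ) u
/-- S'''(u,τ) = ∂_u S''(u,τ). -/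
noncomputable def Sppp (u τ : ℂ) : ℂ := deriv (fun v => Spp v τ) u

/-- Partial derivative in the j-th coordinate of a ℂ-valued function on ℝ^N. -/
noncomputable def pdC {N : ℕ} (j : Fin N) (f : (Fin N → ℝ) → ℂ) (x : Fin N → ℝ) : ℂ :=
  fderiv ℝ f x (Pi.single j 1)

/-- Partial derivative in the j-th coordinate of an ℝ-valued function on ℝ^d. -/
noncomputable def pd {d : ℕ} (j : Fin d) (f : (Fin d → ℝ) → ℝ) (x : Fin d → ℝ) : ℝ :=
  fderiv ℝ f x (Pi.single j 1)

/-- A point of ℂ lies in the lattice ℤ + σℤ. -/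
def InLattice (σ z : ℂ) : Prop := ∃ m n : ℤ, z = (m : ℂ) + (n : ℂ) * σ

lemma J_mul (p q σ : ℂ) (hσ : 0 < σ.im) :
    jacobiTheta₂ p σ * jacobiTheta₂ q σ =
      jacobiTheta₂ (p + q) (2 * σ) * jacobiTheta₂ (p - q) (2 * σ)
      + Complex.exp (2 * Real.pi * I * p + Real.pi * I * σ) *
        (jacobiTheta₂ (p + q + σ) (2 * σ) * jacobiTheta₂ (p - q + σ) (2 * σ)) := by
  have hσ2 : 0 < (2 * σ).im := by simpa using hσ
  have hs : ∀ z : ℂ, Summable (fun n => ‖jacobiTheta₂_term n z σ‖) := fun z =>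
    ((summable_jacobiTheta₂_term_iff z σ).2 hσ).norm
  have hs2 : ∀ z : ℂ, Summable (fun n => ‖jacobiTheta₂_term n z (2 * σ)‖) := fun z =>
    ((summable_jacobiTheta₂_term_iff z (2 * σ)).2 hσ2).norm
  let φ : (ℤ × ℤ) ⊕ (ℤ × ℤ) → ℤ × ℤ :=
    Sum.elim (fun x => (x.1 + x.2, x.1 - x.2)) (fun x => (x.1 + x.2 + 1, x.1 - x.2))
  have hφ : Function.Bijective φ := by
    constructor
    · rintro (⟨a, b⟩ | ⟨a, b⟩) (⟨c, d⟩ | ⟨c, d⟩) h <;>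
        simp only [φ, Sum.elim_inl, Sum.elim_inr, Prod.mk.injEq, Sum.inl.injEq, Sum.inr.injEq,
          reduceCtorEq] at h ⊢ <;> omega
    · rintro ⟨k, m⟩
      rcases Int.even_or_odd' (k + m) with ⟨c, hc | hc⟩
      · refine ⟨Sum.inl (c, k - c), ?_⟩
        simp only [φ, Sum.elim_inl, Prod.mk.injEq]; omega
      · refine ⟨Sum.inr (c, k - c - 1), ?_⟩
        simp only [φ, Sum.elim_inr, Prod.mk.injEq]; omega
  have hF := summable_mul_of_summable_norm (hs p) (hs q)
  have e1 : jacobiTheta₂ p σ * jacobiTheta₂ q σ =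
      ∑' x : ℤ × ℤ, jacobiTheta₂_term x.1 p σ * jacobiTheta₂_term x.2 q σ :=
    tsum_mul_tsum_of_summable_norm (hs p) (hs q)
  have e2 : ∀ a b : ℂ, jacobiTheta₂ a (2 * σ) * jacobiTheta₂ b (2 * σ) =
      ∑' x : ℤ × ℤ, jacobiTheta₂_term x.1 a (2 * σ) * jacobiTheta₂_term x.2 b (2 * σ) :=
    fun a b => tsum_mul_tsum_of_summable_norm (hs2 a) (hs2 b)
  have hG := (Equiv.ofBijective φ hφ).summable_iff.2 hF
  have e3 := (Equiv.ofBijective φ hφ).tsum_eq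
    (fun x : ℤ × ℤ => jacobiTheta₂_term x.1 p σ * jacobiTheta₂_term x.2 q σ)
  rw [e1, ← e3, e2, e2, ← tsum_mul_left]
  refine (Summable.tsum_sum (hG.comp_injective Sum.inl_injective)
    (hG.comp_injective Sum.inr_injective)).trans ?_
  congr 1
  · refine tsum_congr fun x => ?_
    change jacobiTheta₂_term (x.1 + x.2) p σ * jacobiTheta₂_term (x.1 - x.2) q σ = _
    simp only [jacobiTheta₂_term, ← Complex.exp_add]
    congr 1
    push_cast
    ring
  · refine tsum_congr fun x => ?_
    change jacobiTheta₂_term (x.1 + x.2 + 1) p σ * jacobiTheta₂_term (x.1 - x.2) q σ = _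
    simp only [jacobiTheta₂_term, ← Complex.exp_add]
    congr 1
    push_cast
    ring

lemma J_ne (σ : ℂ) (hσ : 0 < σ.im) : ∃ x : ℝ, jacobiTheta₂ (x : ℂ) σ ≠ 0 := by
  by_contra! h
  have hs := ((summable_jacobiTheta₂_term_iff 0 σ).2 hσ).norm
  have hn : ∀ (n : ℤ) (x : ℝ), ‖jacobiTheta₂_term n x σ‖ = ‖jacobiTheta₂_term n 0 σ‖ := by
    intro n x
    simp [norm_jacobiTheta₂_term]
  have key := intervalIntegral.hasSum_integral_of_dominated_convergence
    (μ := MeasureTheory.volume) (a := 0) (b := 1)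
    (F := fun (n : ℤ) (x : ℝ) => jacobiTheta₂_term n x σ) (f := fun x : ℝ => jacobiTheta₂ x σ)
    (fun n _ => ‖jacobiTheta₂_term n 0 σ‖)
    (fun n => by
      apply Continuous.aestronglyMeasurable
      unfold jacobiTheta₂_term
      fun_prop)
    (fun n => Filter.Eventually.of_forall fun x _ => (hn n x).le)
    (Filter.Eventually.of_forall fun x _ => hs)
    (by simp)
    (Filter.Eventually.of_forall fun x _ => hasSum_jacobiTheta₂_term x hσ)
  have h2 : (fun n : ℤ => ∫ x in (0:ℝ)..1, jacobiTheta₂_term n x σ) =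
      fun n => if n = 0 then 1 else 0 := by
    funext n
    split_ifs with hn0
    · subst hn0
      simp [jacobiTheta₂_term]
    · have hc : (2 * Real.pi * I * n : ℂ) ≠ 0 := by
        simp [Real.pi_ne_zero, hn0]
      simp only [jacobiTheta₂_term, Complex.exp_add]
      rw [intervalIntegral.integral_mul_const, integral_exp_mul_complex hc]
      have : Complex.exp (2 * Real.pi * I * n * (1:ℝ)) = 1 := by
        rw [Complex.exp_eq_one_iff]; exact ⟨n, by push_cast; ring⟩
      rw [this]; simp
  rw [h2] at key
  simp only [h, intervalIntegral.integral_zero] at key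
  exact one_ne_zero ((hasSum_ite_eq (0:ℤ) (1:ℂ)).unique key)

lemma theta1_eq (u σ : ℂ) : theta1 u σ =
    -(Complex.exp (Real.pi * I * σ / 4 + Real.pi * I * (u + 1/2)) *
      jacobiTheta₂ (u + 1/2 + σ/2) σ) := by
  unfold theta1 jacobiTheta₂
  rw [← tsum_mul_left]
  congr 1
  refine tsum_congr fun k => ?_
  rw [jacobiTheta₂_term, ← Complex.exp_add]
  congr 1
  ring

lemma theta1_diff (σ : ℂ) (hσ : 0 < σ.im) : Differentiable ℂ (fun v => theta1 v σ) := by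
  have hJ : Differentiable ℂ (fun z => jacobiTheta₂ z σ) := fun z =>
    differentiableAt_jacobiTheta₂_fst z hσ
  have : (fun v => theta1 v σ) = fun u => -(Complex.exp (Real.pi * I * σ / 4 + Real.pi * I * (u + 1/2)) *
      jacobiTheta₂ (u + 1/2 + σ/2) σ) := funext fun u => theta1_eq u σ
  rw [this]
  have h2 : Differentiable ℂ (fun u : ℂ => jacobiTheta₂ (u + 1/2 + σ/2) σ) :=
    hJ.comp (f := fun u : ℂ => u + 1/2 + σ/2) (by fun_prop)
  fun_prop

lemma theta1_add_one (u σ : ℂ) : theta1 (u + 1) σ = - theta1 u σ := by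
  rw [theta1_eq, theta1_eq]
  rw [show u + 1 + 1/2 + σ/2 = (u + 1/2 + σ/2) + 1 by ring, jacobiTheta₂_add_left,
    show (Real.pi * I * σ / 4 + Real.pi * I * (u + 1 + 1/2) : ℂ) =
      (Real.pi * I * σ / 4 + Real.pi * I * (u + 1/2)) + Real.pi * I by ring,
    Complex.exp_add, Complex.exp_pi_mul_I]
  ring

lemma theta1_add_sigma (u σ : ℂ) :
    theta1 (u + σ) σ = - (Complex.exp (-Real.pi * I * σ - 2 * Real.pi * I * u) * theta1 u σ) := by
  rw [theta1_eq, theta1_eq]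
  rw [show u + σ + 1/2 + σ/2 = (u + 1/2 + σ/2) + σ by ring, jacobiTheta₂_add_left']
  rw [← mul_assoc, ← Complex.exp_add, mul_neg, ← mul_assoc, ← Complex.exp_add, neg_neg, ← neg_mul]
  congr 1
  rw [← mul_neg_one, ← Complex.exp_pi_mul_I, ← Complex.exp_add, Complex.exp_eq_exp_iff_exists_int]
  exact ⟨0, by push_cast; ring⟩

lemma theta1_ne (σ : ℂ) (hσ : 0 < σ.im) : ∃ u, theta1 u σ ≠ 0 := by
  obtain ⟨x, hx⟩ := J_ne σ hσ
  refine ⟨x - 1/2 - σ/2, ?_⟩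
  rw [theta1_eq]
  rw [show (x - 1/2 - σ/2 + 1/2 + σ/2 : ℂ) = x by ring]
  exact neg_ne_zero.2 (mul_ne_zero (Complex.exp_ne_zero _) hx)

lemma theta1_mul (σ : ℂ) (hσ : 0 < σ.im) : ∃ f g : ℂ → ℂ, Differentiable ℂ f ∧
    Differentiable ℂ g ∧ ∀ a b, theta1 (a + b) σ * theta1 (a - b) σ = f a * g b - g a * f b := by
  have hσ2 : 0 < (2 * σ).im := by simpa using hσ
  have hJ : Differentiable ℂ (fun z => jacobiTheta₂ z (2 * σ)) := fun z =>
    differentiableAt_jacobiTheta₂_fst z hσ2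
  refine ⟨fun a => jacobiTheta₂ (2 * a) (2 * σ),
    fun a => Complex.exp (Real.pi * I * σ / 2 + 2 * Real.pi * I * a) * jacobiTheta₂ (2 * a + σ) (2 * σ),
    hJ.comp (f := fun u : ℂ => 2 * u) (by fun_prop), ?_, ?_⟩
  · have h2 : Differentiable ℂ (fun u : ℂ => jacobiTheta₂ (2 * u + σ) (2 * σ)) :=
      hJ.comp (f := fun u : ℂ => 2 * u + σ) (by fun_prop)
    fun_prop
  · intro a b
    have h1 := J_mul (a + b + 1/2 + σ/2) (a - b + 1/2 + σ/2) σ hσ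
    rw [show a + b + 1/2 + σ/2 + (a - b + 1/2 + σ/2) = (2 * a + σ) + 1 by ring,
      show a + b + 1/2 + σ/2 - (a - b + 1/2 + σ/2) = 2 * b by ring,
      show (2 * a + σ) + 1 + σ = 2 * a + 2 * σ + 1 by ring,
      jacobiTheta₂_add_left, jacobiTheta₂_add_left, jacobiTheta₂_add_left'] at h1
    rw [theta1_eq, theta1_eq, neg_mul_neg, mul_mul_mul_comm, h1]
    have e1 : Complex.exp (Real.pi * I * σ / 4 + Real.pi * I * (a + b + 1 / 2)) *
        Complex.exp (Real.pi * I * σ / 4 + Real.pi * I * (a - b + 1 / 2)) =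
        - Complex.exp (Real.pi * I * σ / 2 + 2 * Real.pi * I * a) := by
      rw [← mul_neg_one (Complex.exp (Real.pi * I * σ / 2 + 2 * Real.pi * I * a)),
        ← Complex.exp_pi_mul_I, ← Complex.exp_add, ← Complex.exp_add]
      congr 1; ring
    have e2 : Complex.exp (Real.pi * I * σ / 2 + 2 * Real.pi * I * a) *
        (Complex.exp (2 * Real.pi * I * (a + b + 1 / 2 + σ / 2) + Real.pi * I * σ) *
          Complex.exp (-Real.pi * I * (2 * σ + 2 * (2 * a)))) =
        - Complex.exp (Real.pi * I * σ / 2 + 2 * Real.pi * I * b) := by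
      rw [← mul_neg_one (Complex.exp (Real.pi * I * σ / 2 + 2 * Real.pi * I * b)),
        ← Complex.exp_pi_mul_I, ← Complex.exp_add, ← Complex.exp_add, ← Complex.exp_add]
      congr 1; ring
    rw [e1]
    linear_combination (-jacobiTheta₂ (2 * a) (2 * σ) * jacobiTheta₂ (2 * b + σ) (2 * σ)) * e2

/-- Zeros of a function satisfying a two-term addition formula and quasi-periodicity. -/
lemma zero_mem_lattice {t f g : ℂ → ℂ} {σ : ℂ} (ht : Differentiable ℂ t)
    (hne : ∃ u, t u ≠ 0)
    (hW : ∀ a b, t (a + b) * t (a - b) = f a * g b - g a * f b)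
    (h1 : ∀ u, t (u + 1) = - t u)
    (h2 : ∀ u, t (u + σ) = - (Complex.exp (-Real.pi * I * σ - 2 * Real.pi * I * u) * t u))
    (z : ℂ) (hz : t z = 0) : InLattice σ z := by
  have hper : ∀ s, f (s + z) * g s - g (s + z) * f s = 0 := by
    intro s
    rw [← hW, show s + z - s = z by ring, hz, mul_zero]
  have hid : ∀ p q s, t (p + s + z) * t (q - s + z) * (t p * t q) =
      t (p + z) * t (q + z) * (t (p + s) * t (q - s)) := by
    intro p q s
    have A : ∀ x y : ℂ, t x * t y =
        f ((x + y) / 2) * g ((x - y) / 2) - g ((x + y) / 2) * f ((x - y) / 2) := by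
      intro x y
      rw [← hW]; congr 2 <;> ring
    rw [A (p + s + z), A p q, A (p + z), A (p + s)]
    rw [show (p + s + z + (q - s + z)) / 2 = (p + q) / 2 + z by ring,
      show (p + z + (q + z)) / 2 = (p + q) / 2 + z by ring,
      show (p + s + (q - s)) / 2 = (p + q) / 2 by ring,
      show (p + s + z - (q - s + z)) / 2 = (p + s - (q - s)) / 2 by ring,
      show (p + z - (q + z)) / 2 = (p - q) / 2 by ring]
    linear_combination (g ((p - q) / 2) * f ((p + s - (q - s)) / 2) -
      g ((p + s - (q - s)) / 2) * f ((p - q) / 2)) * hper ((p + q) / 2)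
  have hU : Differentiable ℂ (fun p => t (p + z)) := by fun_prop
  have hdU : ∀ p, HasDerivAt (fun p => t (p + z)) (deriv t (p + z)) p := fun p =>
    (ht (p + z)).hasDerivAt.comp_add_const p z
  -- a point where both are nonzero
  obtain ⟨q0, hq0⟩ := hne
  have hq : ∃ q, t q ≠ 0 ∧ t (q + z) ≠ 0 := by
    by_contra! hcon
    have hev : (fun p => t (p + z)) =ᶠ[nhds q0] fun _ => 0 := by
      filter_upwards [(ht q0).continuousAt.eventually_ne hq0] with p hp using hcon p hp
    have := AnalyticOnNhd.eq_of_eventuallyEq (𝕜 := ℂ)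
      (Complex.analyticOnNhd_univ_iff_differentiable.2 hU)
      (analyticOnNhd_const) hev
    have h3 := congrFun this (q0 - z)
    simp only [sub_add_cancel] at h3
    exact hq0 h3
  obtain ⟨q, hq1, hq2⟩ := hq
  have hder : ∀ p, (deriv t (p + z) * t (q + z) - t (p + z) * deriv t (q + z)) * (t p * t q) =
      t (p + z) * t (q + z) * (deriv t p * t q - t p * deriv t q) := by
    intro p
    have d1 : ∀ c, HasDerivAt (fun s => t (p + s + c)) (deriv t (p + c)) 0 := by
      intro c
      have := (ht (p + 0 + c)).hasDerivAt.comp (0:ℂ)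
        (((hasDerivAt_id (0:ℂ)).const_add p).add_const c)
      simpa [Function.comp_def] using this
    have d2 : ∀ c, HasDerivAt (fun s => t (q - s + c)) (-deriv t (q + c)) 0 := by
      intro c
      have := (ht (q - 0 + c)).hasDerivAt.comp (0:ℂ)
        (((hasDerivAt_id (0:ℂ)).const_sub q).add_const c)
      simpa [Function.comp_def] using this
    have d10 := d1 0
    have d20 := d2 0
    simp only [add_zero] at d10 d20
    have L := ((d1 z).mul (d2 z)).mul_const (t p * t q)
    have R := (d10.mul d20).const_mul (t (p + z) * t (q + z))
    have LR := L.unique (R.congr_of_eventuallyEq (Filter.Eventually.of_forall fun s => hid p q s))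
    simp only [add_zero, sub_zero] at LR
    linear_combination LR
  set α := deriv t (q + z) / t (q + z) - deriv t q / t q with hα
  have hode : ∀ p, deriv t (p + z) * t p - t (p + z) * deriv t p = α * (t (p + z) * t p) := by
    intro p
    have := hder p
    rw [hα]
    field_simp
    linear_combination this
  -- local solution
  have hloc : ∃ β, ∀ᶠ p in nhds q, t (p + z) = β * Complex.exp (α * p) * t p := by
    obtain ⟨ε, hε, hball⟩ := Metric.eventually_nhds_iff_ball.1
      ((ht q).continuousAt.eventually_ne hq1)
    have hd : ∀ p ∈ Metric.ball q ε,
        HasDerivAt (fun p => t (p + z) * Complex.exp (-(α * p)) / t p) 0 p := by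
      intro p hp
      have hp0 := hball p hp
      have he : HasDerivAt (fun p => Complex.exp (-(α * p))) (Complex.exp (-(α * p)) * -α) p := by
        have := ((hasDerivAt_id p).const_mul α).neg.cexp
        simpa using this
      have := ((hdU p).mul he).div (ht p).hasDerivAt hp0
      refine this.congr_deriv ?_
      rw [div_eq_zero_iff]
      left
      simp only [Pi.mul_apply]
      linear_combination Complex.exp (-(α * p)) * hode p
    obtain ⟨β, hβ⟩ := Metric.isOpen_ball.exists_is_const_of_deriv_eq_zero
      (convex_ball q ε).isPreconnected
      (fun p hp => (hd p hp).differentiableAt.differentiableWithinAt)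
      (fun p hp => (hd p hp).deriv)
    refine ⟨β, Filter.eventually_of_mem (Metric.ball_mem_nhds q hε) fun p hp => ?_⟩
    have h3 := hβ p hp
    rw [div_eq_iff (hball p hp)] at h3
    have h4 : Complex.exp (-(α * p)) * Complex.exp (α * p) = 1 := by
      rw [← Complex.exp_add]; simp
    linear_combination Complex.exp (α * p) * h3 - t (p + z) * h4
  obtain ⟨β, hβ⟩ := hloc
  have hglob : (fun p => t (p + z)) = fun p => β * Complex.exp (α * p) * t p :=
    AnalyticOnNhd.eq_of_eventuallyEq (𝕜 := ℂ)
      (Complex.analyticOnNhd_univ_iff_differentiable.2 hU)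
      (Complex.analyticOnNhd_univ_iff_differentiable.2 (by fun_prop)) hβ
  have hg : ∀ p, t (p + z) = β * Complex.exp (α * p) * t p := fun p => congrFun hglob p
  have hβq : β * Complex.exp (α * q) * t q ≠ 0 := by rw [← hg]; exact hq2
  have hα1 : Complex.exp α = 1 := by
    have e1 := hg (q + 1)
    rw [show q + 1 + z = (q + z) + 1 by ring, h1, h1, hg q, mul_add, Complex.exp_add,
      mul_one] at e1
    apply mul_left_cancel₀ hβq
    linear_combination e1
  obtain ⟨k, hk⟩ := Complex.exp_eq_one_iff.1 hα1
  have hα2 : Complex.exp (- 2 * Real.pi * I * z) = Complex.exp (α * σ) := by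
    have e1 := hg (q + σ)
    rw [show q + σ + z = (q + z) + σ by ring, h2, h2, hg q, mul_add α, Complex.exp_add,
      show (-Real.pi * I * σ - 2 * Real.pi * I * (q + z) : ℂ) =
       (-Real.pi * I * σ - 2 * Real.pi * I * q) + (- 2 * Real.pi * I * z) by ring,
      Complex.exp_add _ (- 2 * Real.pi * I * z)] at e1
    apply mul_left_cancel₀ (mul_ne_zero
      (Complex.exp_ne_zero (-Real.pi * I * σ - 2 * Real.pi * I * q)) hβq)
    linear_combination -e1
  obtain ⟨n, hn⟩ := Complex.exp_eq_exp_iff_exists_int.1 hα2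
  refine ⟨-n, -k, ?_⟩
  have hpi : (2 * Real.pi * I : ℂ) ≠ 0 := Complex.two_pi_I_ne_zero
  apply mul_left_cancel₀ hpi
  rw [hk] at hn
  push_cast
  linear_combination -hn

/-- The product formula for differences of the p-function. -/
lemma wp_sub {t f g : ℂ → ℂ} (ht : Differentiable ℂ t) (hf : Differentiable ℂ f)
    (hg : Differentiable ℂ g)
    (hW : ∀ a b, t (a + b) * t (a - b) = f a * g b - g a * f b) :
    ∃ K : ℂ, ∀ a b, ((deriv t a)^2 - deriv (deriv t) a * t a) * t b ^ 2
      - ((deriv t b)^2 - deriv (deriv t) b * t b) * t a ^ 2 = K * (t (a + b) * t (a - b)) := by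
  have ht' : Differentiable ℂ (deriv t) := ht.deriv
  have hf' : Differentiable ℂ (deriv f) := hf.deriv
  have hg' : Differentiable ℂ (deriv g) := hg.deriv
  have d1 : ∀ (h : ℂ → ℂ), Differentiable ℂ h → ∀ a b,
      HasDerivAt (fun s => h (a + s)) (deriv h (a + b)) b := by
    intro h hh a b
    exact (hh (a + b)).hasDerivAt.comp_const_add a b
  have d2 : ∀ (h : ℂ → ℂ), Differentiable ℂ h → ∀ a b,
      HasDerivAt (fun s => h (a - s)) (-deriv h (a - b)) b := by
    intro h hh a b
    exact (hh (a - b)).hasDerivAt.comp_const_sub a b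
  have E1 : ∀ a b, deriv t (a + b) * t (a - b) - t (a + b) * deriv t (a - b) =
      f a * deriv g b - g a * deriv f b := by
    intro a b
    have L := (d1 t ht a b).mul (d2 t ht a b)
    have R := ((hg b).hasDerivAt.const_mul (f a)).sub ((hf b).hasDerivAt.const_mul (g a))
    have LR := L.unique (R.congr_of_eventuallyEq (Filter.Eventually.of_forall fun s => hW a s))
    linear_combination LR
  have E2 : ∀ a, 2 * (deriv (deriv t) a * t a - deriv t a ^ 2) =
      f a * deriv (deriv g) 0 - g a * deriv (deriv f) 0 := by
    intro a
    have L := ((d1 _ ht' a 0).mul (d2 t ht a 0)).sub ((d1 t ht a 0).mul (d2 _ ht' a 0))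
    have R := ((hg' 0).hasDerivAt.const_mul (f a)).sub ((hf' 0).hasDerivAt.const_mul (g a))
    have LR := L.unique (R.congr_of_eventuallyEq (Filter.Eventually.of_forall fun s => E1 a s))
    simp only [add_zero, sub_zero] at LR
    linear_combination LR
  have E0 : ∀ a, t a ^ 2 = f a * g 0 - g a * f 0 := by
    intro a
    have := hW a 0
    simp only [add_zero, sub_zero] at this
    linear_combination this
  refine ⟨-(1/2) * (g 0 * -deriv (deriv f) 0 - (- f 0) * deriv (deriv g) 0) * (-1), ?_⟩
  intro a b
  have ea := E2 a
  have eb := E2 b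
  rw [hW, E0 a, E0 b]
  linear_combination (-(1/2)) * (f b * g 0 - g b * f 0) * ea + (1/2) * (f a * g 0 - g a * f 0) * eb

lemma theta1_nonzero {σ : ℂ} (hσ : 0 < σ.im) {z : ℂ} (hz : ¬ InLattice σ z) :
    theta1 z σ ≠ 0 := by
  intro h
  obtain ⟨f, g, -, -, hW⟩ := theta1_mul σ hσ
  exact hz (zero_mem_lattice (t := fun v => theta1 v σ) (theta1_diff σ hσ) (theta1_ne σ hσ) hW
    (fun u => theta1_add_one u σ) (fun u => theta1_add_sigma u σ) z h)

lemma theta1_neg {σ : ℂ} (hσ : 0 < σ.im) (z : ℂ) : theta1 (-z) σ = - theta1 z σ := by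
  obtain ⟨f, g, -, -, hW⟩ := theta1_mul σ hσ
  obtain ⟨c, hc⟩ := theta1_ne σ hσ
  have e1 := hW ((c + z) / 2) ((c - z) / 2)
  have e2 := hW ((c - z) / 2) ((c + z) / 2)
  rw [show (c + z) / 2 + (c - z) / 2 = c by ring, show (c + z) / 2 - (c - z) / 2 = z by ring] at e1
  rw [show (c - z) / 2 + (c + z) / 2 = c by ring, show (c - z) / 2 - (c + z) / 2 = -z by ring] at e2
  apply mul_left_cancel₀ hc
  linear_combination e1 + e2

lemma zeta1_neg {σ : ℂ} (hσ : 0 < σ.im) (z : ℂ) : zeta1 (-z) σ = - zeta1 z σ := by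
  have h : deriv (fun v => theta1 v σ) (-z) = deriv (fun v => theta1 v σ) z := by
    have h1 := deriv_comp_neg (fun v => theta1 v σ) z
    have h2 : (fun v => theta1 (-v) σ) = fun v => - theta1 v σ := funext fun v => theta1_neg hσ v
    rw [h2, deriv.fun_neg] at h1
    exact (neg_injective h1).symm
  unfold zeta1
  rw [h, theta1_neg hσ, div_neg]

lemma wp1_neg {σ : ℂ} (hσ : 0 < σ.im) (z : ℂ) : wp1 (-z) σ = wp1 z σ := by
  have h1 := deriv_comp_neg (fun v => zeta1 v σ) z
  have h2 : (fun v => zeta1 (-v) σ) = fun v => - zeta1 v σ := funext fun v => zeta1_neg hσ v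
  rw [h2, deriv.fun_neg] at h1
  unfold wp1
  rw [neg_injective h1]

lemma wp1'_neg {σ : ℂ} (hσ : 0 < σ.im) (z : ℂ) : wp1' (-z) σ = - wp1' z σ := by
  have h1 := deriv_comp_neg (fun v => wp1 v σ) z
  have h2 : (fun v => wp1 (-v) σ) = fun v => wp1 v σ := funext fun v => wp1_neg hσ v
  rw [h2] at h1
  unfold wp1'
  rw [h1, neg_neg]

lemma InLattice_neg {σ z : ℂ} (h : InLattice σ (-z)) : InLattice σ z := by
  obtain ⟨m, n, h⟩ := h
  exact ⟨-m, -n, by push_cast; linear_combination -h⟩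

lemma wp1_eq {σ : ℂ} (hσ : 0 < σ.im) {z : ℂ} (hz : theta1 z σ ≠ 0) :
    wp1 z σ = ((deriv (fun v => theta1 v σ) z) ^ 2 -
      deriv (deriv (fun v => theta1 v σ)) z * theta1 z σ) / theta1 z σ ^ 2 := by
  have ht := theta1_diff σ hσ
  have ht' := ht.deriv
  have := (ht' z).hasDerivAt.div (ht z).hasDerivAt hz
  have h2 : HasDerivAt (fun v => zeta1 v σ) _ z := this
  unfold wp1
  rw [h2.deriv]
  ring

lemma wp1_hasDerivAt {σ : ℂ} (hσ : 0 < σ.im) {z : ℂ} (hz : theta1 z σ ≠ 0) :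
    HasDerivAt (fun v => wp1 v σ) (wp1' z σ) z := by
  have ht := theta1_diff σ hσ
  have ht' := ht.deriv
  have ht'' := ht'.deriv
  have hd : DifferentiableAt ℂ (fun v => wp1 v σ) z := by
    have hev : (fun v => wp1 v σ) =ᶠ[nhds z] fun z => ((deriv (fun v => theta1 v σ) z) ^ 2 -
        deriv (deriv (fun v => theta1 v σ)) z * theta1 z σ) / theta1 z σ ^ 2 := by
      filter_upwards [(ht z).continuousAt.eventually_ne hz] with v hv using wp1_eq hσ hv
    refine DifferentiableAt.congr_of_eventuallyEq ?_ hev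
    refine DifferentiableAt.div ?_ ((ht z).pow 2) (pow_ne_zero 2 hz)
    exact ((ht' z).pow 2).sub ((ht'' z).mul (ht z))
  exact hd.hasDerivAt

/-- The addition theorem. -/
lemma add_thm {σ : ℂ} (hσ : 0 < σ.im) {a b : ℂ} (ha : theta1 a σ ≠ 0) (hb : theta1 b σ ≠ 0)
    (hab : theta1 (a + b) σ ≠ 0) :
    2 * (zeta1 (a + b) σ - zeta1 a σ - zeta1 b σ) * (wp1 a σ - wp1 b σ) =
      wp1' a σ - wp1' b σ := by
  have ht := theta1_diff σ hσ
  obtain ⟨f, g, hf, hg, hW⟩ := theta1_mul σ hσ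
  obtain ⟨K, hK⟩ := wp_sub ht hf hg hW
  have hP : ∀ x y, theta1 x σ ≠ 0 → theta1 y σ ≠ 0 →
      (theta1 x σ) ^ 2 * (theta1 y σ) ^ 2 * (wp1 x σ - wp1 y σ) =
      K * (theta1 (x + y) σ * theta1 (x - y) σ) := by
    intro x y hx hy
    rw [← hK x y, wp1_eq hσ hx, wp1_eq hσ hy]
    field_simp
  have dt : ∀ c, HasDerivAt (fun s => theta1 (c + s) σ) (deriv (fun v => theta1 v σ) c) 0 := by
    intro c
    have := (ht (c + 0)).hasDerivAt.comp_const_add c 0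
    simpa using this
  have dw : ∀ c, theta1 c σ ≠ 0 → HasDerivAt (fun s => wp1 (c + s) σ) (wp1' c σ) 0 := by
    intro c hc
    have := HasDerivAt.comp_const_add c 0 (wp1_hasDerivAt (z := c + 0) hσ (by simpa using hc))
    simpa using this
  have dt2 : HasDerivAt (fun s => theta1 (a + s + (b + s)) σ)
      (2 * deriv (fun v => theta1 v σ) (a + b)) 0 := by
    have h := (ht (a + 0 + (b + 0))).hasDerivAt.comp (0:ℂ)
      (((hasDerivAt_id (0:ℂ)).const_add a).add ((hasDerivAt_id (0:ℂ)).const_add b))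
    refine h.congr_deriv ?_
    simp only [add_zero]
    ring
  have hev : (fun s => (theta1 (a + s) σ) ^ 2 * (theta1 (b + s) σ) ^ 2 *
      (wp1 (a + s) σ - wp1 (b + s) σ)) =ᶠ[nhds 0]
      fun s => K * theta1 (a - b) σ * theta1 (a + s + (b + s)) σ := by
    have c1 := (dt a).continuousAt.eventually_ne (y := 0) (by simpa using ha)
    have c2 := (dt b).continuousAt.eventually_ne (y := 0) (by simpa using hb)
    filter_upwards [c1, c2] with s h1 h2
    rw [hP _ _ h1 h2, show a + s - (b + s) = a - b by ring]
    ring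
  have L := (((dt a).pow 2).mul ((dt b).pow 2)).mul ((dw a ha).sub (dw b hb))
  have R := dt2.const_mul (K * theta1 (a - b) σ)
  have LR := L.unique (R.congr_of_eventuallyEq hev)
  have h0 := hP a b ha hb
  simp only [Pi.mul_apply, Pi.pow_apply, Pi.sub_apply, add_zero] at LR
  set A := theta1 a σ
  set B := theta1 b σ
  set C := theta1 (a + b) σ
  have zA : deriv (fun v => theta1 v σ) a = zeta1 a σ * A :=
    (div_mul_cancel₀ _ ha).symm
  have zB : deriv (fun v => theta1 v σ) b = zeta1 b σ * B :=
    (div_mul_cancel₀ _ hb).symm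
  have zC : deriv (fun v => theta1 v σ) (a + b) = zeta1 (a + b) σ * C :=
    (div_mul_cancel₀ _ hab).symm
  rw [zA, zB, zC] at LR
  apply mul_left_cancel₀ (mul_ne_zero (pow_ne_zero 2 ha) (pow_ne_zero 2 hb))
  push_cast at LR
  linear_combination 2 * zeta1 (a + b) σ * h0 - LR

/-- The quantity G(a,b) depends only on a - b. -/
lemma G_eq {σ : ℂ} (hσ : 0 < σ.im) {a b : ℂ} (ha : ¬ InLattice σ a) (hb : ¬ InLattice σ b)
    (hd : ¬ InLattice σ (a - b)) :
    (wp1 a σ + wp1 b σ) * (zeta1 (a - b) σ - zeta1 a σ + zeta1 b σ)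
      + 2 * wp1 (a - b) σ * (zeta1 a σ - zeta1 b σ) - (1 / 2) * (wp1' a σ - wp1' b σ)
      = 2 * wp1 (a - b) σ * zeta1 (a - b) σ + wp1' (a - b) σ := by
  have hA := theta1_nonzero hσ ha
  have hB := theta1_nonzero hσ hb
  have hD := theta1_nonzero hσ hd
  have hD' : theta1 (-(a - b)) σ ≠ 0 := by rw [theta1_neg hσ]; exact neg_ne_zero.2 hD
  have e1 := add_thm hσ hA hD' (by rwa [show a + -(a - b) = b by ring])
  have e2 := add_thm hσ hD hB (by rwa [show a - b + b = a by ring])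
  rw [show a + -(a - b) = b by ring, zeta1_neg hσ, wp1_neg hσ, wp1'_neg hσ] at e1
  rw [show a - b + b = a by ring] at e2
  linear_combination (1/2) * e1 + (1/2) * e2

/-- Elliptic Gibbons–Tsarev compatibility identity (Section 4): the identity expressing
the vanishing of F_{jk}(u), i.e. the compatibility of the elliptic Löwner equations
under the elliptic Gibbons–Tsarev system. -/
theorem elliptic_GT_compatibility_identity (σ u x y : ℂ) (hσ : 0 < σ.im)
    (hx : ¬ InLattice σ x) (hy : ¬ InLattice σ y)
    (hxy : ¬ InLattice σ (x - y))
    (hux : ¬ InLattice σ (u + x)) (huy : ¬ InLattice σ (u + y)) :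
    (wp1 (u + y) σ - wp1 y σ) * (zeta1 (x - y) σ - zeta1 x σ)
      - (wp1 (u + x) σ - wp1 x σ) * (zeta1 (y - x) σ - zeta1 y σ)
      + 2 * wp1 (y - x) σ
          * (-zeta1 (u + y) σ + zeta1 y σ + zeta1 (u + x) σ - zeta1 x σ)
      + (1 / 2) * (wp1' (u + y) σ - wp1' (u + x) σ - wp1' y σ + wp1' x σ)
      + (zeta1 (u + y) σ - zeta1 (u + x) σ + zeta1 x σ) * wp1 (u + y) σ
      - (zeta1 (u + x) σ - zeta1 (u + y) σ + zeta1 y σ) * wp1 (u + x) σ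
      - zeta1 y σ * wp1 y σ + zeta1 x σ * wp1 x σ = 0 := by
  have hyx : y - x = -(x - y) := by ring
  rw [hyx, zeta1_neg hσ, wp1_neg hσ]
  have e1 := G_eq hσ hx hy hxy
  have e2 := G_eq hσ hux huy (by rwa [show u + x - (u + y) = x - y by ring])
  rw [show u + x - (u + y) = x - y by ring] at e2
  linear_combination e2 - e1
end

section
/- Derivative of S(u₁−u₂) along a common elliptic Löwner flow (identity (f201)): Let I ⊆ ℝ be an open interval, and let u₁, u₂, ξ, τ : I → ℂ be differentiable with τ taking values in the upper half-plane. Suppose that for a = 1,2 the elliptic Löwner equation holds: 4πi (du_a/dλ) = (−ζ₁(u_a + ξ, τ/2) + ζ₁(ξ, τ/2)) (dτ/dλ). Assume that at every point of I the values θ₁(u₁−u₂, τ), θ₄(u₁−u₂, τ), θ₁(u_a+ξ, τ), θ₄(u_a+ξ, τ) (a=1,2) and θ₁(u_a+ξ, τ/2) are nonzero. Then at every point of I: S'(u₁−u₂, τ)·(du₁/dλ − du₂/dλ) + Ṡ(u₁−u₂, τ)·(dτ/dλ) = (1/(4πi)) S'(u₁+ξ, τ) S'(u₂+ξ, τ)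 (dτ/dλ), where Ṡ(u,τ) := ∂_τθ₁(u,τ)/θ₁(u,τ) − ∂_τθ₄(u,τ)/θ₄(u,τ); i.e., d/dλ [S(u₁−u₂, τ)] = (1/(4πi)) S'(u₁+ξ, τ) S'(u₂+ξ, τ) dτ/dλ. -/
open Complex

/-- Ṡ(u,τ) = ∂_τθ₁(u,τ)/θ₁(u,τ) − ∂_τθ₄(u,τ)/θ₄(u,τ). -/
noncomputable def Sdot (u τ : ℂ) : ℂ :=
  deriv (fun s => theta1 u s) τ / theta1 u τ - deriv (fun s => theta4 u s) τ / theta4 u τ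

lemma lw_theta3_eq (u τ : ℂ) : theta3 u τ = jacobiTheta₂ u τ := by
  unfold theta3 jacobiTheta₂ jacobiTheta₂_term
  refine tsum_congr fun k => ?_
  congr 1; ring

lemma lw_theta4_eq (u τ : ℂ) : theta4 u τ = jacobiTheta₂ (u + 1/2) τ := by
  unfold theta4 jacobiTheta₂ jacobiTheta₂_term
  refine tsum_congr fun k => ?_
  congr 1; ring

lemma lw_theta2_term (u τ : ℂ) (k : ℤ) :
    Complex.exp ((Real.pi : ℂ) * Complex.I * τ * ((k : ℂ) + 1/2)^2
      + 2 * (Real.pi : ℂ) * Complex.I * u * ((k : ℂ) + 1/2))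
    = cexp (Real.pi * I * τ / 4 + Real.pi * I * u) * jacobiTheta₂_term k (u + τ / 2) τ := by
  unfold jacobiTheta₂_term
  rw [← Complex.exp_add]
  congr 1; ring

lemma lw_theta2_eq (u τ : ℂ) :
    theta2 u τ = cexp (Real.pi * I * τ / 4 + Real.pi * I * u) * jacobiTheta₂ (u + τ / 2) τ := by
  unfold theta2 jacobiTheta₂
  rw [← tsum_mul_left]
  exact tsum_congr fun k => lw_theta2_term u τ k

lemma lw_theta1_eq (u τ : ℂ) : theta1 u τ = - theta2 (u + 1/2) τ := rfl

lemma lw_theta2_neg (u τ : ℂ) : theta2 (-u) τ = theta2 u τ := by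
  unfold theta2
  rw [← (Equiv.subLeft (-1 : ℤ)).tsum_eq]
  refine tsum_congr fun k => ?_
  simp only [Equiv.subLeft_apply]
  congr 1; push_cast; ring

lemma lw_theta2_add_one (u τ : ℂ) : theta2 (u + 1) τ = - theta2 u τ := by
  unfold theta2
  rw [← tsum_neg]
  refine tsum_congr fun k => ?_
  have : (Real.pi : ℂ) * I * τ * ((k : ℂ) + 1/2)^2 + 2 * Real.pi * I * (u + 1) * ((k : ℂ) + 1/2)
    = ((Real.pi : ℂ) * I * τ * ((k : ℂ) + 1/2)^2 + 2 * Real.pi * I * u * ((k : ℂ) + 1/2))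
      + (k * (2 * Real.pi * I) + Real.pi * I) := by ring
  rw [this, Complex.exp_add, Complex.exp_add (k * (2 * Real.pi * I)),
    Complex.exp_int_mul_two_pi_mul_I, Complex.exp_pi_mul_I]
  ring

lemma lw_theta1_add_half (u τ : ℂ) : theta1 (u + 1/2) τ = theta2 u τ := by
  rw [lw_theta1_eq, add_assoc, add_halves, lw_theta2_add_one, neg_neg]

lemma lw_theta1_sub_half (u τ : ℂ) : theta1 (u - 1/2) τ = - theta2 u τ := by
  rw [lw_theta1_eq, sub_add_cancel]

lemma lw_theta2_add_half (u τ : ℂ) : theta2 (u + 1/2) τ = - theta1 u τ := by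
  rw [lw_theta1_eq, neg_neg]

lemma lw_theta2_sub_half (u τ : ℂ) : theta2 (u - 1/2) τ = theta1 u τ := by
  rw [lw_theta1_eq, ← lw_theta2_add_one, ← sub_eq_zero]
  have := lw_theta2_add_one (u - 1/2) τ
  have h2 := lw_theta2_add_one (u + 1/2) τ
  have : u - 1/2 + 1 = u + 1/2 := by ring
  simp_all

lemma lw_theta1_neg (u τ : ℂ) : theta1 (-u) τ = - theta1 u τ := by
  rw [← lw_theta2_sub_half, ← lw_theta2_neg, lw_theta1_eq]
  ring_nf

lemma lw_theta3_add_half (u τ : ℂ) : theta3 (u + 1/2) τ = theta4 u τ := rfl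

lemma lw_theta3_sub_half (u τ : ℂ) : theta3 (u - 1/2) τ = theta4 u τ := by
  rw [lw_theta4_eq, lw_theta3_eq, ← jacobiTheta₂_add_left]
  ring_nf

lemma lw_theta4_neg (u τ : ℂ) : theta4 (-u) τ = theta4 u τ := by
  rw [← lw_theta3_sub_half u, lw_theta4_eq, lw_theta3_eq, ← jacobiTheta₂_neg_left]
  ring_nf

/-- Index splitting of `ℤ × ℤ` by the parity of the coordinate sum. -/
noncomputable def lw_equiv : (ℤ × ℤ) ⊕ (ℤ × ℤ) ≃ ℤ × ℤ :=
  Equiv.ofBijective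
    (Sum.elim (fun p => (p.1 + p.2, p.1 - p.2 - 1)) (fun p => (p.1 + p.2, p.1 - p.2))) (by
    constructor
    · rintro (⟨a, b⟩ | ⟨a, b⟩) (⟨c, d⟩ | ⟨c, d⟩) h <;> simp at h ⊢ <;> omega
    · rintro ⟨k, l⟩
      rcases Int.even_or_odd' (k + l) with ⟨m, hm | hm⟩
      · exact ⟨Sum.inr (m, k - m), by simp; omega⟩
      · exact ⟨Sum.inl (m + 1, k - m - 1), by simp; omega⟩)

lemma lw_equiv_inl (p : ℤ × ℤ) : lw_equiv (Sum.inl p) = (p.1 + p.2, p.1 - p.2 - 1) := rfl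

lemma lw_equiv_inr (p : ℤ × ℤ) : lw_equiv (Sum.inr p) = (p.1 + p.2, p.1 - p.2) := rfl

lemma lw_summable2 (u : ℂ) {τ : ℂ} (hτ : 0 < τ.im) :
    Summable fun k : ℤ => Complex.exp ((Real.pi : ℂ) * Complex.I * τ * ((k : ℂ) + 1/2)^2
      + 2 * (Real.pi : ℂ) * Complex.I * u * ((k : ℂ) + 1/2)) := by
  simp_rw [lw_theta2_term]
  exact ((summable_jacobiTheta₂_term_iff _ _).2 hτ).mul_left _

lemma lw_summable3 (u : ℂ) {τ : ℂ} (hτ : 0 < τ.im) :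
    Summable fun k : ℤ => Complex.exp ((Real.pi : ℂ) * Complex.I * τ * (k : ℂ)^2
      + 2 * (Real.pi : ℂ) * Complex.I * u * (k : ℂ)) := by
  convert (summable_jacobiTheta₂_term_iff u τ).2 hτ using 2 with k
  unfold jacobiTheta₂_term
  congr 1; ring

lemma lw_bilinear2 (x y : ℂ) {τ : ℂ} (hτ : 0 < τ.im) :
    theta2 x (τ / 2) * theta2 y (τ / 2)
      = theta3 (x + y) τ * theta2 (x - y) τ + theta2 (x + y) τ * theta3 (x - y) τ := by
  have hτ2 : 0 < (τ / 2).im := by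
    have : (τ / 2).im = τ.im / 2 := by simp
    rw [this]; positivity
  unfold theta2 theta3
  rw [tsum_mul_tsum_of_summable_norm (lw_summable2 x hτ2).norm (lw_summable2 y hτ2).norm,
    tsum_mul_tsum_of_summable_norm (lw_summable3 _ hτ).norm (lw_summable2 _ hτ).norm,
    tsum_mul_tsum_of_summable_norm (lw_summable2 _ hτ).norm (lw_summable3 _ hτ).norm,
    ← lw_equiv.tsum_eq]
  have A := summable_mul_of_summable_norm (lw_summable3 (x+y) hτ).norm (lw_summable2 (x-y) hτ).norm
  have B := summable_mul_of_summable_norm (lw_summable2 (x+y) hτ).norm (lw_summable3 (x-y) hτ).norm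
  refine HasSum.tsum_eq (HasSum.sum ?_ ?_)
  · convert! A.hasSum using 1
    funext p
    simp only [Function.comp, lw_equiv_inl, ← Complex.exp_add]
    congr 1; push_cast; ring
  · convert! B.hasSum using 1
    funext p
    simp only [Function.comp, lw_equiv_inr, ← Complex.exp_add]
    congr 1; push_cast; ring

/-- Addition formula for `θ₁` at `τ/2`. -/
lemma lw_bilinear1 (x y : ℂ) {τ : ℂ} (hτ : 0 < τ.im) :
    theta1 x (τ / 2) * theta1 y (τ / 2)
      = theta3 (x + y) τ * theta2 (x - y) τ - theta2 (x + y) τ * theta3 (x - y) τ := by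
  have h := lw_bilinear2 (x + 1/2) (y + 1/2) hτ
  have e1 : x + 1/2 + (y + 1/2) = (x + y) + 1 := by ring
  have e2 : x + 1/2 - (y + 1/2) = x - y := by ring
  rw [e1, e2, lw_theta2_add_one, lw_theta3_eq (x + y + 1), jacobiTheta₂_add_left,
    ← lw_theta3_eq] at h
  rw [lw_theta1_eq, lw_theta1_eq, neg_mul_neg, h]; ring

lemma lw_bilinear12 (x y : ℂ) {τ : ℂ} (hτ : 0 < τ.im) :
    theta1 x (τ / 2) * theta2 y (τ / 2)
      = theta1 (x + y) τ * theta4 (x - y) τ + theta4 (x + y) τ * theta1 (x - y) τ := by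
  have h := lw_bilinear1 x (y + 1/2) hτ
  have e1 : x + (y + 1/2) = (x + y) + 1/2 := by ring
  have e2 : x - (y + 1/2) = x - y - 1/2 := by ring
  rw [e1, e2, lw_theta1_add_half, lw_theta3_add_half, lw_theta3_sub_half, lw_theta2_add_half,
    lw_theta2_sub_half] at h
  rw [h]; ring

/-- Weierstrass three-term relation. -/
lemma lw_three_term (a b c d : ℂ) {τ : ℂ} (hτ : 0 < τ.im) :
    theta1 (a + b) (τ / 2) * theta1 (a - b) (τ / 2) *
        (theta1 (c + d) (τ / 2) * theta1 (c - d) (τ / 2))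
      - theta1 (a + c) (τ / 2) * theta1 (a - c) (τ / 2) *
        (theta1 (b + d) (τ / 2) * theta1 (b - d) (τ / 2))
      + theta1 (a + d) (τ / 2) * theta1 (a - d) (τ / 2) *
        (theta1 (b + c) (τ / 2) * theta1 (b - c) (τ / 2)) = 0 := by
  have key : ∀ a b : ℂ, theta1 (a + b) (τ / 2) * theta1 (a - b) (τ / 2)
      = theta3 (2 * a) τ * theta2 (2 * b) τ - theta2 (2 * a) τ * theta3 (2 * b) τ := by
    intro a b
    rw [lw_bilinear1 _ _ hτ]
    ring_nf
  simp only [key]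
  ring

lemma lw_diff2 {τ : ℂ} (hτ : 0 < τ.im) : Differentiable ℂ (fun v => theta2 v τ) := by
  simp_rw [lw_theta2_eq]
  have : Differentiable ℂ (fun v => jacobiTheta₂ v τ) :=
    fun z => differentiableAt_jacobiTheta₂_fst z hτ
  have h2 : Differentiable ℂ (fun v : ℂ => jacobiTheta₂ (v + τ / 2) τ) :=
    this.comp (differentiable_id.add_const _)
  fun_prop

lemma lw_diff1 {τ : ℂ} (hτ : 0 < τ.im) : Differentiable ℂ (fun v => theta1 v τ) := by
  simp_rw [lw_theta1_eq]
  exact ((lw_diff2 hτ).comp (differentiable_id.add_const _)).neg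

lemma lw_diff4 {τ : ℂ} (hτ : 0 < τ.im) : Differentiable ℂ (fun v => theta4 v τ) := by
  simp_rw [lw_theta4_eq]
  have : Differentiable ℂ (fun v => jacobiTheta₂ v τ) :=
    fun z => differentiableAt_jacobiTheta₂_fst z hτ
  exact this.comp (differentiable_id.add_const _)

lemma lw_jacobi_snd (z : ℂ) {τ : ℂ} (hτ : 0 < τ.im) :
    HasSum (fun n : ℤ => Real.pi * I * n ^ 2 * jacobiTheta₂_term n z τ)
      (jacobiTheta₂_fderiv z τ (0, 1)) := by
  have h := (ContinuousLinearMap.apply ℂ ℂ ((0, 1) : ℂ × ℂ)).hasSum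
    (hasSum_jacobiTheta₂_term_fderiv z hτ)
  convert! h using 1
  funext n
  simp [jacobiTheta₂_term_fderiv, jacobiTheta₂_term, mul_comm]

/-- The `z`-derivative of `jacobiTheta₂'` (heat equation). -/
lemma lw_jacobi_heat (z : ℂ) {τ : ℂ} (hτ : 0 < τ.im) :
    HasDerivAt (fun w => jacobiTheta₂' w τ)
      (4 * Real.pi * I * jacobiTheta₂_fderiv z τ (0, 1)) z := by
  have hd : Differentiable ℂ (fun w => jacobiTheta₂' w τ) := by
    have e : (fun w => jacobiTheta₂' w τ) = deriv (fun w => jacobiTheta₂ w τ) := by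
      funext w; exact (hasDerivAt_jacobiTheta₂_fst w hτ).deriv.symm
    rw [e]
    have : Differentiable ℂ (fun v => jacobiTheta₂ v τ) :=
      fun z => differentiableAt_jacobiTheta₂_fst z hτ
    exact this.deriv
  have hterm : ∀ (n : ℤ) (w : ℂ), HasDerivAt (fun w => jacobiTheta₂'_term n w τ)
      (4 * Real.pi * I * (Real.pi * I * n ^ 2 * jacobiTheta₂_term n w τ)) w := by
    intro n w
    unfold jacobiTheta₂'_term jacobiTheta₂_term
    have h := ((((hasDerivAt_id w).const_mul (2 * Real.pi * I * n : ℂ)).add_const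
      (Real.pi * I * n ^ 2 * τ)).cexp).const_mul (2 * Real.pi * I * n : ℂ)
    convert! h using 1
    simp only [id]
    ring
  obtain ⟨S, hz⟩ := exists_gt |z.im|
  have hU : IsOpen {u : ℂ | |u.im| < S} :=
    (_root_.continuous_abs.comp continuous_im).isOpen_preimage _ isOpen_Iio
  have hu : Summable fun n : ℤ =>
      2 * Real.pi * |(n : ℝ)| * Real.exp (-Real.pi * (τ.im * n ^ 2 - 2 * S * |(n : ℝ)|)) := by
    simpa only [mul_assoc, pow_one, Int.cast_abs] using
      (summable_pow_mul_jacobiTheta₂_term_bound S hτ 1).mul_left (2 * Real.pi)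
  have h1 := Complex.hasSum_deriv_of_summable_norm (F := fun (n : ℤ) w => jacobiTheta₂'_term n w τ)
    (z := z) hu (fun n w _ => (hterm n w).differentiableAt.differentiableWithinAt) hU
    (fun n w hw => by
      simpa using norm_jacobiTheta₂'_term_le hτ (le_of_lt hw) le_rfl n) hz
  have h2 := (lw_jacobi_snd z hτ).mul_left (4 * Real.pi * I : ℂ)
  have h3 : (fun n : ℤ => deriv (fun w => jacobiTheta₂'_term n w τ) z)
      = fun n : ℤ => 4 * Real.pi * I * (Real.pi * I * n ^ 2 * jacobiTheta₂_term n z τ) := by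
    funext n; exact (hterm n z).deriv
  rw [h3] at h1
  rw [h2.unique h1]
  exact (hd z).hasDerivAt

lemma lw_fderiv_fst (z : ℂ) {τ : ℂ} (hτ : 0 < τ.im) :
    jacobiTheta₂_fderiv z τ (1, 0) = jacobiTheta₂' z τ := by
  have h : HasDerivAt (fun x ↦ jacobiTheta₂ x τ) ((jacobiTheta₂_fderiv z τ) (1, 0)) z :=
    (((hasFDerivAt_jacobiTheta₂ z hτ).comp z (hasFDerivAt_prodMk_left z τ)).hasDerivAt :)
  exact h.unique (hasDerivAt_jacobiTheta₂_fst z hτ)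

lemma lw_heat4 (u : ℂ) {τ : ℂ} (hτ : 0 < τ.im) :
    4 * Real.pi * I * deriv (fun s => theta4 u s) τ
      = deriv (deriv (fun v => theta4 v τ)) u := by
  have e1 : HasDerivAt (fun s => theta4 u s) (jacobiTheta₂_fderiv (u + 1/2) τ (0, 1)) τ := by
    simp_rw [lw_theta4_eq]
    exact (((hasFDerivAt_jacobiTheta₂ (u + 1/2) hτ).comp τ
      (hasFDerivAt_prodMk_right (u + 1/2) τ)).hasDerivAt :)
  have e2 : deriv (fun v => theta4 v τ) = fun v => jacobiTheta₂' (v + 1/2) τ := by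
    funext v
    simp_rw [lw_theta4_eq]
    exact ((hasDerivAt_jacobiTheta₂_fst (v + 1/2) hτ).comp_add_const v (1/2)).deriv
  rw [e1.deriv, e2]
  exact ((lw_jacobi_heat (u + 1/2) hτ).comp_add_const u (1/2)).deriv.symm

lemma lw_heat2 (u : ℂ) {τ : ℂ} (hτ : 0 < τ.im) :
    4 * Real.pi * I * deriv (fun s => theta2 u s) τ
      = deriv (deriv (fun v => theta2 v τ)) u := by
  have e1 : HasDerivAt (fun s => theta2 u s)
      (cexp (Real.pi * I * τ / 4 + Real.pi * I * u) * (Real.pi * I / 4)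
          * jacobiTheta₂ (u + τ / 2) τ
        + cexp (Real.pi * I * τ / 4 + Real.pi * I * u) *
          (1 / 2 * jacobiTheta₂' (u + τ / 2) τ + jacobiTheta₂_fderiv (u + τ / 2) τ (0, 1))) τ := by
    simp_rw [lw_theta2_eq]
    refine HasDerivAt.mul ?_ ?_
    · have h := ((((hasDerivAt_id τ).const_mul (Real.pi * I : ℂ)).div_const 4).add_const
        (Real.pi * I * u)).cexp
      convert! h using 1
      simp
    · have hc : HasDerivAt (fun s : ℂ => (u + s / 2, s)) ((1 / 2 : ℂ), (1 : ℂ)) τ :=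
        (((hasDerivAt_id τ).div_const 2).const_add u).prodMk (hasDerivAt_id τ)
      have h := HasFDerivAt.comp_hasDerivAt (f := fun s : ℂ => (u + s / 2, s)) τ
        (hasFDerivAt_jacobiTheta₂ (u + τ / 2) hτ) hc
      convert! h using 1
      rw [← lw_fderiv_fst _ hτ]
      have : ((1 / 2 : ℂ), (1 : ℂ)) = (1 / 2 : ℂ) • ((1 : ℂ), (0 : ℂ)) + ((0 : ℂ), (1 : ℂ)) := by
        simp
      rw [this, map_add, map_smul, smul_eq_mul]
  have hE : ∀ v : ℂ, HasDerivAt (fun v : ℂ => cexp (Real.pi * I * τ / 4 + Real.pi * I * v))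
      (cexp (Real.pi * I * τ / 4 + Real.pi * I * v) * (Real.pi * I)) v := by
    intro v
    have h := (((hasDerivAt_id v).const_mul (Real.pi * I : ℂ)).const_add
      (Real.pi * I * τ / 4)).cexp
    convert! h using 1
    simp
  have hJ : ∀ v : ℂ, HasDerivAt (fun v : ℂ => jacobiTheta₂ (v + τ / 2) τ)
      (jacobiTheta₂' (v + τ / 2) τ) v := fun v =>
    (hasDerivAt_jacobiTheta₂_fst (v + τ / 2) hτ).comp_add_const v (τ / 2)
  have hJ' := (lw_jacobi_heat (u + τ / 2) hτ).comp_add_const u (τ / 2)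
  have e2 : deriv (fun v => theta2 v τ) = fun v =>
      cexp (Real.pi * I * τ / 4 + Real.pi * I * v) * (Real.pi * I) * jacobiTheta₂ (v + τ / 2) τ
        + cexp (Real.pi * I * τ / 4 + Real.pi * I * v) * jacobiTheta₂' (v + τ / 2) τ := by
    funext v
    simp_rw [lw_theta2_eq]
    exact ((hE v).mul (hJ v)).deriv
  rw [e1.deriv, e2]
  have h3 := (((hE u).mul_const (Real.pi * I)).mul (hJ u)).add ((hE u).mul hJ')
  refine Eq.trans ?_ h3.deriv.symm
  linear_combination (0 : ℂ) * I_sq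

lemma lw_heat1 (u : ℂ) {τ : ℂ} (hτ : 0 < τ.im) :
    4 * Real.pi * I * deriv (fun s => theta1 u s) τ
      = deriv (deriv (fun v => theta1 v τ)) u := by
  have h := lw_heat2 (u + 1/2) hτ
  have e0 : deriv (fun s => theta1 u s) τ = - deriv (fun s => theta2 (u + 1/2) s) τ := by
    simp_rw [lw_theta1_eq]
    rw [deriv.fun_neg]
  have e1 : deriv (fun v => theta1 v τ) = fun v => - deriv (fun v => theta2 v τ) (v + 1/2) := by
    funext v
    simp_rw [lw_theta1_eq]
    rw [deriv.fun_neg, deriv_comp_add_const (fun v => theta2 v τ)]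
  rw [e0, e1, deriv.fun_neg, deriv_comp_add_const (deriv fun v => theta2 v τ), ← h]
  ring

lemma lw_W (y : ℂ) {τ : ℂ} (hτ : 0 < τ.im) (hτ2 : 0 < (τ / 2).im) :
    2 * (deriv (fun v => theta1 v τ) y * theta4 y τ - theta1 y τ * deriv (fun v => theta4 v τ) y)
      = deriv (fun v => theta1 v (τ / 2)) 0 * theta2 y (τ / 2) := by
  have hf : (fun x => theta1 x (τ / 2) * theta2 y (τ / 2)) = fun x =>
      theta1 (y + x) τ * theta4 (y - x) τ - theta4 (y + x) τ * theta1 (y - x) τ := by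
    funext x
    rw [lw_bilinear12 x y hτ, ← neg_sub y x, lw_theta1_neg, lw_theta4_neg, add_comm x y]
    ring
  have hl := ((lw_diff1 hτ2) 0).hasDerivAt.mul_const (theta2 y (τ / 2))
  have d1 := ((lw_diff1 hτ) (y + 0)).hasDerivAt.comp_const_add y 0
  have d4 := ((lw_diff4 hτ) (y + 0)).hasDerivAt.comp_const_add y 0
  have d1' := ((lw_diff1 hτ) (y - 0)).hasDerivAt.comp_const_sub y 0
  have d4' := ((lw_diff4 hτ) (y - 0)).hasDerivAt.comp_const_sub y 0
  have hr := (d1.mul d4').sub (d4.mul d1')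
  have := (hf ▸ hl : HasDerivAt (fun x => theta1 (y + x) τ * theta4 (y - x) τ
    - theta4 (y + x) τ * theta1 (y - x) τ) _ 0).unique hr
  simp only [add_zero, sub_zero] at this
  rw [this]; ring

lemma lw_W' (y : ℂ) {τ : ℂ} (hτ : 0 < τ.im) (hτ2 : 0 < (τ / 2).im) :
    2 * (deriv (deriv (fun v => theta1 v τ)) y * theta4 y τ
        - theta1 y τ * deriv (deriv (fun v => theta4 v τ)) y)
      = deriv (fun v => theta1 v (τ / 2)) 0 * deriv (fun v => theta2 v (τ / 2)) y := by
  have hf := funext fun y => lw_W y hτ hτ2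
  have hr := ((lw_diff2 hτ2) y).hasDerivAt.const_mul (deriv (fun v => theta1 v (τ / 2)) 0)
  have d1 := ((lw_diff1 hτ) y).hasDerivAt
  have d4 := ((lw_diff4 hτ) y).hasDerivAt
  have d1' := ((lw_diff1 hτ).deriv y).hasDerivAt
  have d4' := ((lw_diff4 hτ).deriv y).hasDerivAt
  have hl := ((d1'.mul d4).sub (d1.mul d4')).const_mul 2
  have := hr.unique (hf ▸ hl)
  rw [this]; ring

lemma lw_key (x y : ℂ) {τ : ℂ} (hτ : 0 < τ.im) (hτ2 : 0 < (τ / 2).im) :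
    theta2 0 (τ / 2) * (deriv (fun v => theta2 v (τ / 2)) (x - y)
          * (theta1 x (τ / 2) * theta1 y (τ / 2))
        - theta2 (x - y) (τ / 2) * (deriv (fun v => theta1 v (τ / 2)) x * theta1 y (τ / 2)
          - theta1 x (τ / 2) * deriv (fun v => theta1 v (τ / 2)) y))
      = deriv (fun v => theta1 v (τ / 2)) 0 * theta1 (x - y) (τ / 2)
          * (theta2 x (τ / 2) * theta2 y (τ / 2)) := by
  have h10 : theta1 0 (τ / 2) = 0 := by
    have := lw_theta1_neg 0 (τ / 2)
    rw [neg_zero] at this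
    exact self_eq_neg.mp this
  have h20 : deriv (fun v => theta2 v (τ / 2)) 0 = 0 := by
    have := deriv_comp_neg (fun v => theta2 v (τ / 2)) 0
    simp only [lw_theta2_neg, neg_zero] at this
    exact self_eq_neg.mp this
  have hf : (fun e => - (theta2 x (τ / 2) * theta2 y (τ / 2)) *
        (theta1 (x - y + e) (τ / 2) * theta1 e (τ / 2))
      - theta1 (x + e) (τ / 2) * theta1 (y - e) (τ / 2) *
        (theta2 (x - y) (τ / 2) * theta2 0 (τ / 2))
      + theta1 x (τ / 2) * theta1 y (τ / 2) *
        (theta2 (x - y + e) (τ / 2) * theta2 e (τ / 2))) = fun _ => (0 : ℂ) := by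
    funext e
    have h := lw_three_term ((x + y) / 2) ((x - y) / 2 + 1 / 2) ((x - y) / 2 + e) ((x - y) / 2) hτ
    have a1 : (x + y) / 2 + ((x - y) / 2 + 1 / 2) = x + 1 / 2 := by ring
    have a2 : (x + y) / 2 - ((x - y) / 2 + 1 / 2) = y - 1 / 2 := by ring
    have a3 : (x - y) / 2 + e + (x - y) / 2 = x - y + e := by ring
    have a4 : (x - y) / 2 + e - (x - y) / 2 = e := by ring
    have a5 : (x + y) / 2 + ((x - y) / 2 + e) = x + e := by ring
    have a6 : (x + y) / 2 - ((x - y) / 2 + e) = y - e := by ring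
    have a7 : (x - y) / 2 + 1 / 2 + (x - y) / 2 = (x - y) + 1 / 2 := by ring
    have a8 : (x - y) / 2 + 1 / 2 - (x - y) / 2 = 0 + 1 / 2 := by ring
    have a9 : (x + y) / 2 + (x - y) / 2 = x := by ring
    have a10 : (x + y) / 2 - (x - y) / 2 = y := by ring
    have a11 : (x - y) / 2 + 1 / 2 + ((x - y) / 2 + e) = (x - y + e) + 1 / 2 := by ring
    have a12 : (x - y) / 2 + 1 / 2 - ((x - y) / 2 + e) = - e + 1 / 2 := by ring
    rw [a1, a2, a3, a4, a5, a6, a7, a8, a9, a10, a11, a12] at h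
    simp only [lw_theta1_add_half, lw_theta1_sub_half, lw_theta2_neg] at h
    linear_combination h
  have dz := ((lw_diff1 hτ2) (x - y + 0)).hasDerivAt.comp_const_add (x - y) 0
  have d0 := ((lw_diff1 hτ2) 0).hasDerivAt
  have dx := ((lw_diff1 hτ2) (x + 0)).hasDerivAt.comp_const_add x 0
  have dy := ((lw_diff1 hτ2) (y - 0)).hasDerivAt.comp_const_sub y 0
  have ez := ((lw_diff2 hτ2) (x - y + 0)).hasDerivAt.comp_const_add (x - y) 0
  have e0 := ((lw_diff2 hτ2) 0).hasDerivAt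
  have hG := (((dz.mul d0).const_mul (- (theta2 x (τ / 2) * theta2 y (τ / 2)))).sub
    ((dx.mul dy).mul_const (theta2 (x - y) (τ / 2) * theta2 0 (τ / 2)))).add
    ((ez.mul e0).const_mul (theta1 x (τ / 2) * theta1 y (τ / 2)))
  have hc := hasDerivAt_const (0 : ℂ) (0 : ℂ)
  rw [← hf] at hc
  have := hc.unique hG
  simp only [add_zero, sub_zero, h10, h20, mul_zero] at this
  linear_combination -this

/-- Derivative of S(u₁−u₂) along a common elliptic Löwner flow (identity (f201)). -/
theorem Loewner_flow_S_derivative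
    (I : Set ℝ) (hIopen : IsOpen I) (hIinterval : I.OrdConnected)
    (u1 u2 ξ τ u1' u2' ξ' τ' : ℝ → ℂ)
    (hu1 : ∀ l ∈ I, HasDerivAt u1 (u1' l) l)
    (hu2 : ∀ l ∈ I, HasDerivAt u2 (u2' l) l)
    (hξ : ∀ l ∈ I, HasDerivAt ξ (ξ' l) l)
    (hτ : ∀ l ∈ I, HasDerivAt τ (τ' l) l)
    (hup : ∀ l ∈ I, 0 < (τ l).im)
    (hL1 : ∀ l ∈ I, 4 * (Real.pi : ℂ) * Complex.I * u1' l
      = (-zeta1 (u1 l + ξ l) (τ l / 2) + zeta1 (ξ l) (τ l / 2)) * τ' l)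
    (hL2 : ∀ l ∈ I, 4 * (Real.pi : ℂ) * Complex.I * u2' l
      = (-zeta1 (u2 l + ξ l) (τ l / 2) + zeta1 (ξ l) (τ l / 2)) * τ' l)
    (h1 : ∀ l ∈ I, theta1 (u1 l - u2 l) (τ l) ≠ 0)
    (h2 : ∀ l ∈ I, theta4 (u1 l - u2 l) (τ l) ≠ 0)
    (h3 : ∀ l ∈ I, theta1 (u1 l + ξ l) (τ l) ≠ 0)
    (h4 : ∀ l ∈ I, theta4 (u1 l + ξ l) (τ l) ≠ 0)
    (h5 : ∀ l ∈ I, theta1 (u2 l + ξ l) (τ l) ≠ 0)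
    (h6 : ∀ l ∈ I, theta4 (u2 l + ξ l) (τ l) ≠ 0)
    (h7 : ∀ l ∈ I, theta1 (u1 l + ξ l) (τ l / 2) ≠ 0)
    (h8 : ∀ l ∈ I, theta1 (u2 l + ξ l) (τ l / 2) ≠ 0) :
    ∀ l ∈ I,
      Sp (u1 l - u2 l) (τ l) * (u1' l - u2' l) + Sdot (u1 l - u2 l) (τ l) * τ' l
        = 1 / (4 * (Real.pi : ℂ) * Complex.I)
            * Sp (u1 l + ξ l) (τ l) * Sp (u2 l + ξ l) (τ l) * τ' l := by
  intro l hl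
  have hl1 := hL1 l hl
  have hl2 := hL2 l hl
  have n1 := h1 l hl
  have n2 := h2 l hl
  have n3 := h3 l hl
  have n4 := h4 l hl
  have n5 := h5 l hl
  have n6 := h6 l hl
  have n7 := h7 l hl
  have n8 := h8 l hl
  have ht := hup l hl
  generalize τ l = t at *
  generalize τ' l = t' at *
  have ez : u1 l - u2 l = (u1 l + ξ l) - (u2 l + ξ l) := by ring
  rw [ez] at n1 n2 ⊢
  generalize u1 l + ξ l = x at *
  generalize u2 l + ξ l = y at *
  have ht2 : 0 < (t / 2).im := by
    have : (t / 2).im = t.im / 2 := by simp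
    rw [this]; positivity
  have hpi : (4 * (Real.pi : ℂ) * Complex.I) ≠ 0 := by
    simp [Real.pi_ne_zero]
  have hP : ∀ x, 2 * (theta1 x t * theta4 x t) = theta1 x (t / 2) * theta2 0 (t / 2) := by
    intro x
    have := lw_bilinear12 x 0 ht
    rw [add_zero, sub_zero] at this
    rw [this]; ring
  have m0 : theta2 0 (t / 2) ≠ 0 := by
    intro h0
    have := hP x
    rw [h0, mul_zero] at this
    exact mul_ne_zero two_ne_zero (mul_ne_zero n3 n4) this
  have mz : theta1 (x - y) (t / 2) ≠ 0 := by
    intro h0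
    have := hP (x - y)
    rw [h0, zero_mul] at this
    exact mul_ne_zero two_ne_zero (mul_ne_zero n1 n2) this
  have hSp : ∀ v, theta1 v t ≠ 0 → theta4 v t ≠ 0 → Sp v t
      = deriv (fun v => theta1 v (t / 2)) 0 * theta2 v (t / 2)
        / (theta1 v (t / 2) * theta2 0 (t / 2)) := by
    intro v a b
    rw [← hP v, ← lw_W v ht ht2]
    unfold Sp zeta1 zeta4
    field_simp
  have hSd : 4 * (Real.pi : ℂ) * Complex.I * Sdot (x - y) t
      = deriv (fun v => theta1 v (t / 2)) 0 * deriv (fun v => theta2 v (t / 2)) (x - y)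
        / (theta1 (x - y) (t / 2) * theta2 0 (t / 2)) := by
    rw [← hP (x - y), ← lw_W' (x - y) ht ht2, ← lw_heat1 _ ht, ← lw_heat4 _ ht]
    unfold Sdot
    field_simp
  have key := lw_key x y ht ht2
  have goal2 : Sp (x - y) t * (zeta1 y (t / 2) - zeta1 x (t / 2)) + 4 * (Real.pi : ℂ) * Complex.I * Sdot (x - y) t
      = Sp x t * Sp y t := by
    rw [hSd, hSp _ n1 n2, hSp _ n3 n4, hSp _ n5 n6]
    unfold zeta1
    generalize deriv (fun v => theta1 v (t / 2)) 0 = D at *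
    field_simp
    linear_combination D * key
  apply mul_left_cancel₀ hpi
  have hR : 4 * (Real.pi : ℂ) * Complex.I * (1 / (4 * (Real.pi : ℂ) * Complex.I) * Sp x t * Sp y t * t')
      = Sp x t * Sp y t * t' := by
    field_simp
  rw [hR, ← goal2]
  linear_combination Sp (x - y) t * (hl1 - hl2)
end

section
/- S(u(z)) generates conserved densities (equation (cq3)): Let U ⊆ ℝ^N be open with coordinates λ₁,…,λ_N, and let u, ξ₁,…,ξ_N, τ : U → ℂ be C² functions with τ taking values in the upper half-plane, such that ξ₁,…,ξ_N, τ satisfy the elliptic Gibbons–Tsarev system and u satisfies for every j the elliptic Löwner equation 4πi ∂u/∂λ_j = (−ζ₁(u+ξ_j, τ/2) + ζ₁(ξ_j, τ/2)) ∂τ/∂λ_j. Assume all theta-function values appearing in denominators (including S'(ξ_i,τ)) are nonzero on U, and define Γ_{ij} := −(1/(4πi))(S'(ξ_j,τ)/S'(ξ_i,τ)) S''(ξ_i−ξ_j,τ) ∂τ/∂λ_j for i ≠ j. Then for all i ≠ j: ∂/∂λ_i [ S'(ξ_j,τ) S'(u+ξ_j,τ) ∂τ/∂λ_j ] = Γ_{ij}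 · S'(ξ_i,τ) S'(u+ξ_i,τ) ∂τ/∂λ_i + Γ_{ji} · S'(ξ_j,τ) S'(u+ξ_j,τ) ∂τ/∂λ_j. (Since 4πi ∂_{λ_j} S(u) = S'(ξ_j,τ) S'(u+ξ_j,τ) ∂τ/∂λ_j, this says ∂²S(u)/∂λ_i∂λ_j = Γ_{ij} ∂S(u)/∂λ_i + Γ_{ji} ∂S(u)/∂λ_j.) -/
open Complex

/-- Γ_{ij} = −(1/(4πi)) (S'(ξ_j,τ)/S'(ξ_i,τ)) S''(ξ_i−ξ_j,τ) ∂τ/∂λ_j. -/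
noncomputable def Gam {N : ℕ} (ξ : Fin N → (Fin N → ℝ) → ℂ) (τ : (Fin N → ℝ) → ℂ)
    (i j : Fin N) (x : Fin N → ℝ) : ℂ :=
  -(1 / (4 * (Real.pi : ℂ) * Complex.I)) * (Sp (ξ j x) (τ x) / Sp (ξ i x) (τ x))
    * Spp (ξ i x - ξ j x) (τ x) * pdC j τ x


namespace GTproof

/-- Summand of the `k`-th `u`-derivative of the theta series with characteristic `c`. -/
noncomputable def wt (c : ℤ) (k : ℕ) (n : ℤ) (u τ : ℂ) : ℂ :=
  ((Real.pi : ℂ) * I * ((2 * n + c : ℤ) : ℂ)) ^ k * jacobiTheta₂_term (2 * n + c) (u / 2) (τ / 4)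

/-- The `k`-th `u`-derivative of the theta series with characteristic `c`. -/
noncomputable def W (c : ℤ) (k : ℕ) (u τ : ℂ) : ℂ := ∑' n : ℤ, wt c k n u τ

/-- Summable majorant. -/
noncomputable def bd (c : ℤ) (S T : ℝ) (k : ℕ) (n : ℤ) : ℝ :=
  Real.pi ^ k * (|((2 * n + c : ℤ) : ℝ)| ^ k *
    Real.exp (-Real.pi * (T * ((2 * n + c : ℤ) : ℝ) ^ 2 - 2 * S * |((2 * n + c : ℤ) : ℝ)|)))

lemma bd_summable (c : ℤ) (S : ℝ) {T : ℝ} (hT : 0 < T) (k : ℕ) : Summable (bd c S T k) := by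
  have h := summable_pow_mul_jacobiTheta₂_term_bound S hT k
  have hinj : Function.Injective (fun n : ℤ => 2 * n + c) := by
    intro a b hab
    simp only at hab
    omega
  have h2 := (h.comp_injective hinj).mul_left (Real.pi ^ k)
  refine h2.congr fun n => ?_
  simp only [bd, Function.comp_apply, Int.cast_abs]

lemma wt_le (c : ℤ) (k : ℕ) (n : ℤ) {S T : ℝ} (hT : 0 < T) {u τ : ℂ}
    (hz : |(u / 2).im| ≤ S) (hτ : T ≤ (τ / 4).im) : ‖wt c k n u τ‖ ≤ bd c S T k n := by
  unfold wt bd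
  rw [norm_mul, norm_pow, ← mul_assoc, ← mul_pow]
  have h := norm_jacobiTheta₂_term_le hT hz hτ (2 * n + c)
  rw [Int.cast_abs] at h
  refine mul_le_mul (le_of_eq ?_) h (norm_nonneg _) (by positivity)
  congr 1
  rw [norm_mul, norm_mul, norm_I, Complex.norm_of_nonneg Real.pi_pos.le, norm_intCast, mul_one]

lemma wt_hasFDerivAt (c : ℤ) (k : ℕ) (n : ℤ) (p : ℂ × ℂ) :
    HasFDerivAt (fun p : ℂ × ℂ => wt c k n p.1 p.2)
      (wt c (k+1) n p.1 p.2 • ContinuousLinearMap.fst ℂ ℂ ℂ +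
        (wt c (k+2) n p.1 p.2 / (4 * Real.pi * I)) • ContinuousLinearMap.snd ℂ ℂ ℂ) p := by
  unfold wt jacobiTheta₂_term
  set m : ℂ := ((2 * n + c : ℤ) : ℂ)
  have h1 : HasFDerivAt (fun p : ℂ × ℂ => 2 * (Real.pi:ℂ) * I * m * (p.1 / 2) +
      Real.pi * I * m ^ 2 * (p.2 / 4))
      ((2 * (Real.pi:ℂ) * I * m * (1/2)) • ContinuousLinearMap.fst ℂ ℂ ℂ +
       ((Real.pi:ℂ) * I * m ^ 2 * (1/4)) • ContinuousLinearMap.snd ℂ ℂ ℂ) p := by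
    have := ((hasFDerivAt_fst (𝕜 := ℂ) (p := p)).const_mul (2 * (Real.pi:ℂ) * I * m * (1/2))).add
      ((hasFDerivAt_snd (𝕜 := ℂ) (p := p)).const_mul ((Real.pi:ℂ) * I * m ^ 2 * (1/4)))
    refine this.congr_of_eventuallyEq (Filter.Eventually.of_forall fun q => ?_)
    simp only [Pi.add_apply]
    ring
  have h2 := h1.cexp.const_mul (((Real.pi:ℂ) * I * m) ^ k)
  refine h2.congr_fderiv ?_
  have hpi : (Real.pi : ℂ) ≠ 0 := by exact_mod_cast Real.pi_ne_zero
  ext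
  · simp; ring
  · simp; field_simp; ring

lemma strip (u : ℂ) {τ : ℂ} (hτ : 0 < τ.im) : ∃ S T : ℝ, 0 < T ∧ |(u/2).im| < S ∧ T < (τ/4).im := by
  have h4 : 0 < (τ/4).im := by
    have : (τ/4).im = τ.im / 4 := by simp
    rw [this]; positivity
  obtain ⟨T, hT, hT'⟩ := exists_between h4
  obtain ⟨S, hS⟩ := exists_gt |(u/2).im|
  exact ⟨S, T, hT, hS, hT'⟩

lemma wt_summable (c : ℤ) (k : ℕ) (u : ℂ) {τ : ℂ} (hτ : 0 < τ.im) :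
    Summable (fun n => wt c k n u τ) := by
  obtain ⟨S, T, hT, hS, hT'⟩ := strip u hτ
  exact (bd_summable c S hT k).of_norm_bounded (fun n => wt_le c k n hT hS.le hT'.le)

lemma wt_summable_norm (c : ℤ) (k : ℕ) (u : ℂ) {τ : ℂ} (hτ : 0 < τ.im) :
    Summable (fun n => ‖wt c k n u τ‖) := (wt_summable c k u hτ).norm

lemma W_hasFDerivAt (c : ℤ) (k : ℕ) (u : ℂ) {τ : ℂ} (hτ : 0 < τ.im) :
    HasFDerivAt (fun p : ℂ × ℂ => W c k p.1 p.2)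
      (W c (k+1) u τ • ContinuousLinearMap.fst ℂ ℂ ℂ +
        (W c (k+2) u τ / (4 * Real.pi * I)) • ContinuousLinearMap.snd ℂ ℂ ℂ) (u, τ) := by
  obtain ⟨S, T, hT, hS, hT'⟩ := strip u hτ
  let V : Set (ℂ × ℂ) := {u | |(u/2).im| < S} ×ˢ {v | T < (v/4).im}
  have e2 (z : ℂ) : (z/2).im = z.im / 2 := by simp
  have e4 (z : ℂ) : (z/4).im = z.im / 4 := by simp
  have hVo : IsOpen V := by
    refine IsOpen.prod ?_ ?_
    · exact isOpen_lt (by fun_prop) continuous_const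
    · exact isOpen_lt continuous_const (by fun_prop)
  have hVp : IsPreconnected V := by
    refine (Convex.isPreconnected ?_).prod (Convex.isPreconnected ?_)
    · have : {u : ℂ | |(u/2).im| < S} = {u | -(2*S) < u.im} ∩ {u | u.im < 2*S} := by
        ext z
        simp only [Set.mem_ofPred_eq, Set.mem_inter_iff, e2, abs_lt]
        constructor <;> rintro ⟨h1, h2⟩ <;> constructor <;> linarith
      rw [this]
      exact (convex_halfSpace_im_gt _).inter (convex_halfSpace_im_lt _)
    · have : {v : ℂ | T < (v/4).im} = {v | 4*T < v.im} := by
        ext z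
        simp only [Set.mem_ofPred_eq, e4]
        constructor <;> intro h1 <;> linarith
      rw [this]
      exact convex_halfSpace_im_gt _
  have hVmem : (u, τ) ∈ V := ⟨hS, hT'⟩
  have hpi : (Real.pi : ℂ) ≠ 0 := by exact_mod_cast Real.pi_ne_zero
  have hns (a : ℂ) (f : (ℂ × ℂ) →L[ℂ] ℂ) : ‖a • f‖ = ‖a‖ * ‖f‖ := norm_smul a f
  have key := hasFDerivAt_tsum_of_isPreconnected
    (f := fun n (p : ℂ × ℂ) => wt c k n p.1 p.2)
    (f' := fun n (p : ℂ × ℂ) => wt c (k+1) n p.1 p.2 • ContinuousLinearMap.fst ℂ ℂ ℂ +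
        (wt c (k+2) n p.1 p.2 / (4 * Real.pi * I)) • ContinuousLinearMap.snd ℂ ℂ ℂ)
    (u := fun n => bd c S T (k+1) n + bd c S T (k+2) n * ‖(4 * Real.pi * I : ℂ)⁻¹‖)
    ((bd_summable c S hT (k+1)).add ((bd_summable c S hT (k+2)).mul_right _)) hVo hVp
    (fun n p _ => wt_hasFDerivAt c k n p) ?_ hVmem (wt_summable c k u hτ) hVmem
  · refine key.congr_fderiv ?_
    have s1 := (wt_summable c (k+1) u hτ).hasSum
    have s2 := ((wt_summable c (k+2) u hτ).div_const (4 * Real.pi * I : ℂ)).hasSum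
    have t1 := s1.smul_const (ContinuousLinearMap.fst ℂ ℂ ℂ)
    have t2 := s2.smul_const (ContinuousLinearMap.snd ℂ ℂ ℂ)
    rw [tsum_div_const] at t2
    exact (t1.add t2).tsum_eq
  · intro n p hp
    have b1 := wt_le c (k+1) n hT (le_of_lt hp.1) (le_of_lt hp.2)
    have b2 := wt_le c (k+2) n hT (le_of_lt hp.1) (le_of_lt hp.2)
    refine (norm_add_le _ _).trans (add_le_add ?_ ?_)
    · rw [hns]
      exact (mul_le_of_le_one_right (norm_nonneg _) (ContinuousLinearMap.norm_fst_le ..)).trans b1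
    · rw [hns]
      refine (mul_le_of_le_one_right (norm_nonneg _) (ContinuousLinearMap.norm_snd_le ..)).trans ?_
      rw [div_eq_mul_inv, norm_mul]
      exact mul_le_mul_of_nonneg_right b2 (norm_nonneg _)

lemma W_hasDerivAt (c : ℤ) (k : ℕ) (u : ℂ) {τ : ℂ} (hτ : 0 < τ.im) :
    HasDerivAt (fun v => W c k v τ) (W c (k+1) u τ) u := by
  have h := (W_hasFDerivAt c k u hτ).comp_hasDerivAt u
    ((hasDerivAt_id u).prodMk (hasDerivAt_const u τ))
  simpa using! h

lemma W_neg (c : ℤ) (u τ : ℂ) : W c 0 (-u) τ = W c 0 u τ := by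
  unfold W
  rw [← (Equiv.subLeft (-c)).tsum_eq]
  refine tsum_congr fun n => ?_
  simp only [wt, jacobiTheta₂_term, pow_zero, one_mul, Equiv.subLeft_apply]
  congr 1
  push_cast
  ring

lemma exp_shift (m : ℤ) (hm : Even m) (x : ℂ) : Complex.exp (x + Real.pi * I * m) = Complex.exp x := by
  obtain ⟨r, rfl⟩ := hm
  rw [show x + (Real.pi:ℂ) * I * ((r + r : ℤ) : ℂ) = x + r * (2 * Real.pi * I) by push_cast; ring]
  rw [Complex.exp_add, Complex.exp_int_mul_two_pi_mul_I, mul_one]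

lemma W0_add_one (k : ℕ) (u τ : ℂ) : W 0 k (u + 1) τ = W 0 k u τ := by
  unfold W
  refine tsum_congr fun n => ?_
  simp only [wt, jacobiTheta₂_term]
  congr 1
  rw [← exp_shift (-(2 * n)) (by simp)]
  congr 1
  push_cast
  ring

lemma W1_add_one (k : ℕ) (u τ : ℂ) : W 1 k (u + 1) τ = - W 1 k u τ := by
  unfold W
  rw [← tsum_neg]
  refine tsum_congr fun n => ?_
  simp only [wt, jacobiTheta₂_term]
  rw [← mul_neg]
  congr 1
  rw [← neg_one_mul (Complex.exp _), ← Complex.exp_pi_mul_I, ← Complex.exp_add,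
    ← exp_shift (-(2 * n)) (by simp)]
  congr 1
  push_cast
  ring

lemma th1_eq (u τ : ℂ) : theta1 u τ = - W 1 0 (u + 1/2) τ := by
  unfold theta1 W
  congr 1
  refine tsum_congr fun n => ?_
  simp only [wt, jacobiTheta₂_term, pow_zero, one_mul]
  congr 1
  push_cast
  ring

lemma th4_eq (u τ : ℂ) : theta4 u τ = W 0 0 (u + 1/2) τ := by
  unfold theta4 W
  refine tsum_congr fun n => ?_
  simp only [wt, jacobiTheta₂_term, pow_zero, one_mul]
  congr 1
  push_cast
  ring

lemma W_mul (p q : ℂ) {σ : ℂ} (hσ : 0 < σ.im) :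
    W 1 0 p σ * W 1 0 q σ = W 0 0 (p+q) (2*σ) * W 1 0 (p-q) (2*σ)
      + W 1 0 (p+q) (2*σ) * W 0 0 (p-q) (2*σ) := by
  have h2 : 0 < (2*σ).im := by
    have : (2*σ).im = 2 * σ.im := by simp
    rw [this]; positivity
  let e : (ℤ × ℤ) ⊕ (ℤ × ℤ) ≃ ℤ × ℤ :=
    { toFun := Sum.elim (fun x => (x.2 + x.1, x.1 - x.2 - 1)) (fun x => (x.2 + x.1, x.1 - x.2))
      invFun := fun y => if Even (y.1 + y.2) then Sum.inr ((y.1+y.2)/2, (y.1-y.2)/2)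
        else Sum.inl ((y.1+y.2+1)/2, (y.1-y.2-1)/2)
      left_inv := by
        rintro (⟨a, b⟩ | ⟨a, b⟩)
        · have : ¬ Even (b + a + (a - b - 1)) := by
            rw [Int.not_even_iff_odd]; exact ⟨a - 1, by ring⟩
          simp only [Sum.elim_inl, this, if_false]
          congr 2 <;> omega
        · have : Even (b + a + (a - b)) := ⟨a, by ring⟩
          simp only [Sum.elim_inr, this, if_true]
          congr 2 <;> omega
      right_inv := by
        rintro ⟨m, n⟩
        by_cases h : Even (m + n)
        · simp only [h, if_true, Sum.elim_inr]
          obtain ⟨r, hr⟩ := h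
          ext <;> simp only <;> omega
        · simp only [h, if_false, Sum.elim_inl]
          rw [Int.not_even_iff_odd] at h
          obtain ⟨r, hr⟩ := h
          ext <;> simp only <;> omega }
  have H (c1 c2 : ℤ) (x y : ℂ) {τ : ℂ} (hτ : 0 < τ.im) :
      HasSum (fun z : ℤ × ℤ => wt c1 0 z.1 x τ * wt c2 0 z.2 y τ) (W c1 0 x τ * W c2 0 y τ) := by
    have := summable_mul_of_summable_norm (wt_summable_norm c1 0 x hτ) (wt_summable_norm c2 0 y hτ)
    have h3 := tsum_mul_tsum_of_summable_norm (wt_summable_norm c1 0 x hτ) (wt_summable_norm c2 0 y hτ)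
    unfold W
    rw [h3]
    exact this.hasSum
  have hL := H 1 1 p q hσ
  have hR := (H 0 1 (p+q) (p-q) h2).sum (f := Sum.elim (fun z : ℤ × ℤ => wt 0 0 z.1 (p+q) (2*σ) * wt 1 0 z.2 (p-q) (2*σ))
    (fun z : ℤ × ℤ => wt 1 0 z.1 (p+q) (2*σ) * wt 0 0 z.2 (p-q) (2*σ))) (H 1 0 (p+q) (p-q) h2)
  refine ((e.hasSum_iff (f := fun z : ℤ × ℤ => wt 1 0 z.1 p σ * wt 1 0 z.2 q σ)).mpr hL).unique ?_
  convert hR using 1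
  funext z
  rcases z with ⟨a, b⟩ | ⟨a, b⟩ <;>
  · simp only [Function.comp_apply, Sum.elim_inl, Sum.elim_inr, Equiv.coe_fn_mk, e, wt,
      jacobiTheta₂_term, pow_zero, one_mul, ← Complex.exp_add]
    congr 1
    push_cast
    ring

lemma Wh_hasDerivAt (c : ℤ) (k : ℕ) (u : ℂ) {τ : ℂ} (hτ : 0 < τ.im) :
    HasDerivAt (fun v => W c k (v + 1/2) τ) (W c (k+1) (u + 1/2) τ) u :=
  HasDerivAt.comp_add_const u (1/2) (W_hasDerivAt c k (u + 1/2) hτ)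

lemma zeta1_eq (u : ℂ) {τ : ℂ} (hτ : 0 < τ.im) :
    zeta1 u τ = W 1 1 (u + 1/2) τ / W 1 0 (u + 1/2) τ := by
  have h : deriv (fun v => theta1 v τ) u = - W 1 1 (u + 1/2) τ := by
    simp only [th1_eq]
    exact (Wh_hasDerivAt 1 0 u hτ).neg.deriv
  rw [zeta1, h, th1_eq, neg_div_neg_eq]

lemma zeta4_eq (u : ℂ) {τ : ℂ} (hτ : 0 < τ.im) :
    zeta4 u τ = W 0 1 (u + 1/2) τ / W 0 0 (u + 1/2) τ := by
  have h : deriv (fun v => theta4 v τ) u = W 0 1 (u + 1/2) τ := by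
    simp only [th4_eq]
    exact (Wh_hasDerivAt 0 0 u hτ).deriv
  rw [zeta4, h, th4_eq]

lemma Sp_eq (u : ℂ) {τ : ℂ} (hτ : 0 < τ.im) :
    Sp u τ = W 1 1 (u + 1/2) τ / W 1 0 (u + 1/2) τ - W 0 1 (u + 1/2) τ / W 0 0 (u + 1/2) τ := by
  rw [Sp, zeta1_eq u hτ, zeta4_eq u hτ]

lemma W1_sub_half (k : ℕ) (u τ : ℂ) : W 1 k (u - 1/2) τ = - W 1 k (u + 1/2) τ := by
  rw [show u + 1/2 = (u - 1/2) + 1 by ring, W1_add_one, neg_neg]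

lemma W0_sub_half (k : ℕ) (u τ : ℂ) : W 0 k (u - 1/2) τ = W 0 k (u + 1/2) τ := by
  rw [show u + 1/2 = (u - 1/2) + 1 by ring, W0_add_one]

lemma theta1_neg (u τ : ℂ) : theta1 (-u) τ = - theta1 u τ := by
  rw [th1_eq, th1_eq, show -u + 1/2 = -(u - 1/2) by ring, W_neg, W1_sub_half]

lemma theta4_neg (u τ : ℂ) : theta4 (-u) τ = theta4 u τ := by
  rw [th4_eq, th4_eq, show -u + 1/2 = -(u - 1/2) by ring, W_neg, W0_sub_half]

lemma Sp_neg (u τ : ℂ) : Sp (-u) τ = - Sp u τ := by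
  have h1 : deriv (fun v => theta1 v τ) (-u) = deriv (fun v => theta1 v τ) u := by
    have := deriv_comp_neg (fun v => theta1 v τ) u
    simp only [theta1_neg, deriv.fun_neg] at this
    exact (neg_injective this).symm
  have h4 : deriv (fun v => theta4 v τ) (-u) = - deriv (fun v => theta4 v τ) u := by
    have := deriv_comp_neg (fun v => theta4 v τ) u
    simp only [theta4_neg] at this
    rw [this, neg_neg]
  rw [Sp, Sp, zeta1, zeta4, zeta1, zeta4, h1, h4, theta1_neg, theta4_neg, div_neg, neg_div]
  ring

lemma Spp_neg (u τ : ℂ) : Spp (-u) τ = Spp u τ := by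
  unfold Spp
  have := deriv_comp_neg (fun v => Sp v τ) u
  simp only [Sp_neg, deriv.fun_neg] at this
  exact (neg_injective this).symm

/-- Points where `θ₁θ₄` does not vanish. -/
def Good (τ u : ℂ) : Prop := W 1 0 (u + 1/2) τ ≠ 0 ∧ W 0 0 (u + 1/2) τ ≠ 0

lemma good_of {τ u : ℂ} (h1 : theta1 u τ ≠ 0) (h4 : theta4 u τ ≠ 0) : Good τ u := by
  rw [th1_eq] at h1
  rw [th4_eq] at h4
  exact ⟨neg_ne_zero.mp h1, h4⟩

lemma good_eventually {τ u : ℂ} (hτ : 0 < τ.im) (h : Good τ u) : ∀ᶠ v in nhds u, Good τ v :=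
  ((Wh_hasDerivAt 1 0 u hτ).continuousAt.eventually_ne h.1).and
    ((Wh_hasDerivAt 0 0 u hτ).continuousAt.eventually_ne h.2)

lemma half_im {τ : ℂ} (hτ : 0 < τ.im) : 0 < (τ/2).im := by
  have : (τ/2).im = τ.im / 2 := by simp
  rw [this]; positivity

lemma two_half (τ : ℂ) : 2 * (τ / 2) = τ := by ring

lemma K_zero (σ : ℂ) : W 1 0 (0 + 1/2) σ = 0 := by
  have h := W1_sub_half 0 0 σ
  rw [show (0:ℂ) - 1/2 = -(0 + 1/2) by ring, W_neg] at h
  exact self_eq_neg.mp h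

lemma L_deriv_zero {σ : ℂ} (hσ : 0 < σ.im) : W 1 1 0 σ = 0 := by
  have h := deriv_comp_neg (fun v => W 1 0 v σ) 0
  simp only [W_neg, neg_zero] at h
  rw [(W_hasDerivAt 1 0 0 hσ).deriv] at h
  exact self_eq_neg.mp h

/-- `K(x) L(0) = 2 a(x) b(x)`. -/
lemma KL (x : ℂ) {τ : ℂ} (hτ : 0 < τ.im) :
    W 1 0 (x + 1/2) (τ/2) * W 1 0 0 (τ/2) = 2 * (W 1 0 (x + 1/2) τ * W 0 0 (x + 1/2) τ) := by
  rw [W_mul _ _ (half_im hτ), two_half, add_zero, sub_zero]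
  ring

lemma KL' (x : ℂ) {τ : ℂ} (hτ : 0 < τ.im) :
    W 1 1 (x + 1/2) (τ/2) * W 1 0 0 (τ/2) = 2 * (W 1 1 (x + 1/2) τ * W 0 0 (x + 1/2) τ
      + W 1 0 (x + 1/2) τ * W 0 1 (x + 1/2) τ) := by
  have h1 := (Wh_hasDerivAt 1 0 x (half_im hτ)).mul_const (W 1 0 0 (τ/2))
  have h2 := ((Wh_hasDerivAt 1 0 x hτ).mul (Wh_hasDerivAt 0 0 x hτ)).const_mul 2
  refine h1.unique (h2.congr_of_eventuallyEq (Filter.Eventually.of_forall fun v => ?_))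
  exact KL v hτ

lemma LK (x : ℂ) {τ : ℂ} (hτ : 0 < τ.im) :
    W 1 0 x (τ/2) * W 1 1 (0 + 1/2) (τ/2) = 2 * (W 1 1 (x + 1/2) τ * W 0 0 (x + 1/2) τ
      - W 1 0 (x + 1/2) τ * W 0 1 (x + 1/2) τ) := by
  have h1 := (Wh_hasDerivAt 1 0 0 (half_im hτ)).const_mul (W 1 0 x (τ/2))
  have hp (c : ℤ) : HasDerivAt (fun y => W c 0 (x + y + 1/2) τ) (W c 1 (x + 1/2) τ) 0 := by
    have := (Wh_hasDerivAt c 0 (x + 0) hτ).comp_const_add x 0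
    simpa only [add_zero] using this
  have hm (c : ℤ) : HasDerivAt (fun y => W c 0 (x - y + 1/2) τ) (-W c 1 (x + 1/2) τ) 0 := by
    have := (Wh_hasDerivAt c 0 (x - 0) hτ).comp_const_sub x 0
    simpa only [sub_zero] using this
  have h2 := ((hp 1).mul (hm 0)).sub ((hp 0).mul (hm 1))
  have h3 := h1.unique (h2.congr_of_eventuallyEq (Filter.Eventually.of_forall fun y => ?_))
  · rw [h3]
    simp only [add_zero, sub_zero]
    ring
  · show W 1 0 x (τ/2) * W 1 0 (y + 1/2) (τ/2) = W 1 0 (x + y + 1/2) τ * W 0 0 (x - y + 1/2) τ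
      - W 0 0 (x + y + 1/2) τ * W 1 0 (x - y + 1/2) τ
    rw [W_mul _ _ (half_im hτ), two_half, show x - (y + 1/2) = x - y - 1/2 by ring, W1_sub_half,
      W0_sub_half, ← add_assoc]
    ring

lemma LK' (x : ℂ) {τ : ℂ} (hτ : 0 < τ.im) :
    W 1 1 x (τ/2) * W 1 1 (0 + 1/2) (τ/2) = 2 * (W 1 2 (x + 1/2) τ * W 0 0 (x + 1/2) τ
      - W 1 0 (x + 1/2) τ * W 0 2 (x + 1/2) τ) := by
  have h1 := (W_hasDerivAt 1 0 x (half_im hτ)).mul_const (W 1 1 (0 + 1/2) (τ/2))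
  have h2 := (((Wh_hasDerivAt 1 1 x hτ).mul (Wh_hasDerivAt 0 0 x hτ)).sub
    ((Wh_hasDerivAt 1 0 x hτ).mul (Wh_hasDerivAt 0 1 x hτ))).const_mul 2
  have h3 := h1.unique (h2.congr_of_eventuallyEq (Filter.Eventually.of_forall fun v => LK v hτ))
  rw [h3]
  ring

lemma KK (p q : ℂ) {σ : ℂ} (hσ : 0 < σ.im) :
    W 1 0 (p + 1/2) σ * W 1 0 (q + 1/2) σ = W 0 0 (p+q) (2*σ) * W 1 0 (p-q) (2*σ)
      - W 1 0 (p+q) (2*σ) * W 0 0 (p-q) (2*σ) := by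
  rw [W_mul _ _ hσ, show p + 1/2 + (q + 1/2) = p + q + 1 by ring,
    show p + 1/2 - (q + 1/2) = p - q by ring, W0_add_one, W1_add_one]
  ring

lemma riemann (x d e : ℂ) {σ : ℂ} (hσ : 0 < σ.im) :
    W 1 0 (x + d + e + 1/2) σ * W 1 0 (d - e + 1/2) σ * (W 1 0 x σ * W 1 0 0 σ)
      = W 1 0 (x + d + 1/2) σ * W 1 0 (d + 1/2) σ * (W 1 0 (x + e) σ * W 1 0 e σ)
       - W 1 0 (x + e + 1/2) σ * W 1 0 (e + 1/2) σ * (W 1 0 (x + d) σ * W 1 0 d σ) := by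
  rw [KK _ _ hσ, KK _ _ hσ, KK _ _ hσ, W_mul _ _ hσ, W_mul _ _ hσ, W_mul _ _ hσ]
  rw [show x + d + e + (d - e) = x + 2 * d by ring, show x + d + e - (d - e) = x + 2 * e by ring,
    show x + d + d = x + 2 * d by ring, show x + d - d = x by ring,
    show x + e + e = x + 2 * e by ring, show x + e - e = x by ring, add_zero, sub_zero]
  ring

lemma riemann' (x d : ℂ) {σ : ℂ} (hσ : 0 < σ.im) :
    (W 1 1 (x + d + 1/2) σ * W 1 0 (d + 1/2) σ - W 1 0 (x + d + 1/2) σ * W 1 1 (d + 1/2) σ)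
        * (W 1 0 x σ * W 1 0 0 σ)
      = W 1 0 (x + d + 1/2) σ * W 1 0 (d + 1/2) σ * (W 1 1 x σ * W 1 0 0 σ)
       - W 1 0 (x + 1/2) σ * W 1 1 (0 + 1/2) σ * (W 1 0 (x + d) σ * W 1 0 d σ) := by
  have hp (z : ℂ) : HasDerivAt (fun y => W 1 0 (z + y + 1/2) σ) (W 1 1 (z + 1/2) σ) 0 := by
    have := (Wh_hasDerivAt 1 0 (z + 0) hσ).comp_const_add z 0
    simpa only [add_zero] using this
  have hq (z : ℂ) : HasDerivAt (fun y => W 1 0 (z + y) σ) (W 1 1 z σ) 0 := by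
    have := (W_hasDerivAt 1 0 (z + 0) hσ).comp_const_add z 0
    simpa only [add_zero] using this
  have hm : HasDerivAt (fun y => W 1 0 (d - y + 1/2) σ) (-W 1 1 (d + 1/2) σ) 0 := by
    have := (Wh_hasDerivAt 1 0 (d - 0) hσ).comp_const_sub d 0
    simpa only [sub_zero] using this
  have h1 := ((hp (x + d)).mul hm).mul_const (W 1 0 x σ * W 1 0 0 σ)
  have h2 := (((hq x).mul (W_hasDerivAt 1 0 0 hσ)).const_mul
      (W 1 0 (x + d + 1/2) σ * W 1 0 (d + 1/2) σ)).sub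
    (((hp x).mul (Wh_hasDerivAt 1 0 0 hσ)).mul_const (W 1 0 (x + d) σ * W 1 0 d σ))
  have h3 := h1.unique (h2.congr_of_eventuallyEq
    (Filter.Eventually.of_forall fun e => riemann x d e hσ))
  simp only [add_zero, sub_zero, L_deriv_zero hσ, zero_add] at h3 ⊢
  have hK := K_zero σ
  rw [zero_add] at hK
  rw [hK] at h3
  linear_combination h3

/-- `g = θ₁''/θ₁ - θ₄''/θ₄`. -/
noncomputable def gg (u τ : ℂ) : ℂ :=
  W 1 2 (u + 1/2) τ / W 1 0 (u + 1/2) τ - W 0 2 (u + 1/2) τ / W 0 0 (u + 1/2) τ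

lemma Good.K {τ u : ℂ} (hτ : 0 < τ.im) (h : Good τ u) :
    W 1 0 (u + 1/2) (τ/2) ≠ 0 ∧ W 1 0 0 (τ/2) ≠ 0 := by
  have := KL u hτ
  have h2 : W 1 0 (u + 1/2) (τ/2) * W 1 0 0 (τ/2) ≠ 0 := by
    rw [this]
    exact mul_ne_zero two_ne_zero (mul_ne_zero h.1 h.2)
  exact ⟨left_ne_zero_of_mul h2, right_ne_zero_of_mul h2⟩

lemma Sp_LK {τ u : ℂ} (hτ : 0 < τ.im) (h : Good τ u) :
    Sp u τ = W 1 1 (0 + 1/2) (τ/2) * W 1 0 u (τ/2) / (W 1 0 (u + 1/2) (τ/2) * W 1 0 0 (τ/2)) := by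
  rw [KL u hτ, mul_comm (W 1 1 (0 + 1/2) (τ/2)), LK u hτ, Sp_eq u hτ]
  have h1 := h.1
  have h2 := h.2
  generalize u + 1/2 = w at *
  field_simp

lemma gg_LK {τ u : ℂ} (hτ : 0 < τ.im) (h : Good τ u) :
    gg u τ = W 1 1 (0 + 1/2) (τ/2) * W 1 1 u (τ/2) / (W 1 0 (u + 1/2) (τ/2) * W 1 0 0 (τ/2)) := by
  rw [KL u hτ, mul_comm (W 1 1 (0 + 1/2) (τ/2)), LK' u hτ, gg]
  have h1 := h.1
  have h2 := h.2
  generalize u + 1/2 = w at *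
  field_simp

lemma key {τ x d : ℂ} (hτ : 0 < τ.im) (hx : Good τ x) (hd : Good τ d) (hs : Good τ (x + d)) :
    Sp x τ * (zeta1 d (τ/2) - zeta1 (x + d) (τ/2)) = Sp (x + d) τ * Sp d τ - gg x τ := by
  rw [Sp_LK hτ hx, Sp_LK hτ hd, Sp_LK hτ hs, gg_LK hτ hx, zeta1_eq _ (half_im hτ),
    zeta1_eq _ (half_im hτ)]
  have h := riemann' x d (half_im hτ)
  have h0 := (hx.K hτ).2
  have h1 := (hx.K hτ).1
  have h2 := (hd.K hτ).1
  have h3 := (hs.K hτ).1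
  generalize W 1 0 (x + d + 1/2) (τ/2) = Ks at *
  generalize W 1 0 (d + 1/2) (τ/2) = Kd at *
  generalize W 1 0 (x + 1/2) (τ/2) = Kx at *
  generalize W 1 0 0 (τ/2) = L0 at *
  generalize W 1 1 (0 + 1/2) (τ/2) = k at *
  generalize W 1 1 (x + d + 1/2) (τ/2) = Ks' at *
  generalize W 1 1 (d + 1/2) (τ/2) = Kd' at *
  field_simp
  linear_combination (-k) * h

/-- Explicit `u`-derivative of `Sp`. -/
noncomputable def fp (u τ : ℂ) : ℂ :=
  (W 1 2 (u + 1/2) τ * W 1 0 (u + 1/2) τ - W 1 1 (u + 1/2) τ * W 1 1 (u + 1/2) τ)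
      / W 1 0 (u + 1/2) τ ^ 2
  - (W 0 2 (u + 1/2) τ * W 0 0 (u + 1/2) τ - W 0 1 (u + 1/2) τ * W 0 1 (u + 1/2) τ)
      / W 0 0 (u + 1/2) τ ^ 2

/-- Explicit `u`-derivative of `gg`. -/
noncomputable def gp (u τ : ℂ) : ℂ :=
  (W 1 3 (u + 1/2) τ * W 1 0 (u + 1/2) τ - W 1 2 (u + 1/2) τ * W 1 1 (u + 1/2) τ)
      / W 1 0 (u + 1/2) τ ^ 2
  - (W 0 3 (u + 1/2) τ * W 0 0 (u + 1/2) τ - W 0 2 (u + 1/2) τ * W 0 1 (u + 1/2) τ)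
      / W 0 0 (u + 1/2) τ ^ 2

lemma gg_hasDerivAt {τ u : ℂ} (hτ : 0 < τ.im) (h : Good τ u) :
    HasDerivAt (fun v => gg v τ) (gp u τ) u :=
  ((Wh_hasDerivAt 1 2 u hτ).div (Wh_hasDerivAt 1 0 u hτ) h.1).sub
    ((Wh_hasDerivAt 0 2 u hτ).div (Wh_hasDerivAt 0 0 u hτ) h.2)

lemma Sp_hasDerivAt' {τ u : ℂ} (hτ : 0 < τ.im) (h : Good τ u) :
    HasDerivAt (fun v => Sp v τ) (fp u τ) u := by
  have := ((Wh_hasDerivAt 1 1 u hτ).div (Wh_hasDerivAt 1 0 u hτ) h.1).sub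
    ((Wh_hasDerivAt 0 1 u hτ).div (Wh_hasDerivAt 0 0 u hτ) h.2)
  exact this.congr_of_eventuallyEq (Filter.Eventually.of_forall fun v => Sp_eq v hτ)

lemma Spp_eq {τ u : ℂ} (hτ : 0 < τ.im) (h : Good τ u) : Spp u τ = fp u τ :=
  (Sp_hasDerivAt' hτ h).deriv

lemma Sp_hasDerivAt {τ u : ℂ} (hτ : 0 < τ.im) (h : Good τ u) :
    HasDerivAt (fun v => Sp v τ) (Spp u τ) u := by
  rw [Spp_eq hτ h]
  exact Sp_hasDerivAt' hτ h

lemma zeta1_hasDerivAt {τ u : ℂ} (hτ : 0 < τ.im) (h : Good τ u) :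
    HasDerivAt (fun v => zeta1 v (τ/2)) (-wp1 u (τ/2)) u := by
  have h1 := (Wh_hasDerivAt 1 1 u (half_im hτ)).div (Wh_hasDerivAt 1 0 u (half_im hτ)) (h.K hτ).1
  have h2 := h1.congr_of_eventuallyEq
    (Filter.Eventually.of_forall fun v => zeta1_eq v (half_im hτ))
  rw [wp1, neg_neg]
  exact h2.differentiableAt.hasDerivAt

lemma star {τ x d : ℂ} (hτ : 0 < τ.im) (hx : Good τ x) (hd : Good τ d) (hs : Good τ (x + d)) :
    Spp x τ * (zeta1 d (τ/2) - zeta1 (x + d) (τ/2)) + Sp x τ * wp1 d (τ/2) + gp x τ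
      = - Sp (x + d) τ * Spp d τ := by
  -- derivative in x
  have sx := (Sp_hasDerivAt hτ hs).comp_add_const x d
  have zx := (zeta1_hasDerivAt hτ hs).comp_add_const x d
  have sd := (Sp_hasDerivAt hτ hs).comp_const_add x d
  have zd := (zeta1_hasDerivAt hτ hs).comp_const_add x d
  have cx : ∀ᶠ y in nhds x, Good τ (y + d) :=
    (continuous_id.add continuous_const).continuousAt.eventually (good_eventually hτ hs)
  have cd : ∀ᶠ y in nhds d, Good τ (x + y) :=
    (continuous_const.add continuous_id).continuousAt.eventually (good_eventually hτ hs)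
  have A1 := (Sp_hasDerivAt hτ hx).mul (zx.const_sub (zeta1 d (τ/2)))
  have A2 := (sx.mul_const (Sp d τ)).sub (gg_hasDerivAt hτ hx)
  have A := A1.unique (A2.congr_of_eventuallyEq (by
    filter_upwards [cx, good_eventually hτ hx] with y h1 h2
    exact key hτ h2 hd h1))
  have B1 := ((zeta1_hasDerivAt hτ hd).sub zd).const_mul (Sp x τ)
  have B2 := (sd.mul (Sp_hasDerivAt hτ hd)).sub_const (gg x τ)
  have B := B1.unique (B2.congr_of_eventuallyEq (by
    filter_upwards [cd, good_eventually hτ hd] with y h1 h2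
    exact key hτ hx h2 h1))
  linear_combination A - B

lemma hasFDerivAt_quot {f g : ℂ × ℂ → ℂ} {f' g' : ℂ × ℂ →L[ℂ] ℂ} {p : ℂ × ℂ}
    (hf : HasFDerivAt f f' p) (hg : HasFDerivAt g g' p) (h : g p ≠ 0) :
    HasFDerivAt (fun q => f q / g q) (f p • ((-(g p ^ 2)⁻¹) • g') + (g p)⁻¹ • f') p := by
  have h1 := (hasDerivAt_inv h).comp_hasFDerivAt p hg
  have h2 := hf.mul h1
  exact h2

lemma Sp_hasFDerivAt {τ u : ℂ} (hτ : 0 < τ.im) (h : Good τ u) :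
    HasFDerivAt (fun p : ℂ × ℂ => Sp p.1 p.2)
      (Spp u τ • ContinuousLinearMap.fst ℂ ℂ ℂ +
        (gp u τ / (4 * Real.pi * I)) • ContinuousLinearMap.snd ℂ ℂ ℂ) (u, τ) := by
  have hW (c : ℤ) (k : ℕ) : HasFDerivAt (fun p : ℂ × ℂ => W c k (p.1 + 1/2) p.2)
      (W c (k+1) (u + 1/2) τ • ContinuousLinearMap.fst ℂ ℂ ℂ +
        (W c (k+2) (u + 1/2) τ / (4 * Real.pi * I)) • ContinuousLinearMap.snd ℂ ℂ ℂ) (u, τ) := by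
    have h1 := W_hasFDerivAt c k (u + 1/2) hτ
    have h2 : HasFDerivAt (fun p : ℂ × ℂ => (p.1 + 1/2, p.2))
        (ContinuousLinearMap.id ℂ (ℂ × ℂ)) (u, τ) := by
      have := ((hasFDerivAt_fst (𝕜 := ℂ) (p := (u, τ))).add_const (1/2)).prodMk
        (hasFDerivAt_snd (𝕜 := ℂ) (p := (u, τ)))
      exact this
    exact HasFDerivAt.comp (u, τ) h1 h2
  have hev : (fun p : ℂ × ℂ => Sp p.1 p.2) =ᶠ[nhds (u, τ)] fun p =>
      W 1 1 (p.1 + 1/2) p.2 / W 1 0 (p.1 + 1/2) p.2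
        - W 0 1 (p.1 + 1/2) p.2 / W 0 0 (p.1 + 1/2) p.2 := by
    have : ∀ᶠ p : ℂ × ℂ in nhds (u, τ), 0 < p.2.im :=
      (isOpen_lt continuous_const (Complex.continuous_im.comp continuous_snd)).mem_nhds hτ
    filter_upwards [this] with p hp
    exact Sp_eq p.1 hp
  have hpi : (Real.pi : ℂ) ≠ 0 := by exact_mod_cast Real.pi_ne_zero
  have hD := (hasFDerivAt_quot (hW 1 1) (hW 1 0) h.1).sub (hasFDerivAt_quot (hW 0 1) (hW 0 0) h.2)
  refine (hD.congr_of_eventuallyEq hev).congr_fderiv ?_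
  rw [Spp_eq hτ h, fp, gp]
  have h1 := h.1
  have h2 := h.2
  clear hW hD hev
  generalize u + 1/2 = w at *
  ext
  · simp
    field_simp
    ring
  · simp
    field_simp
    ring

lemma pdC_Sp {N : ℕ} (i : Fin N) {v τ : (Fin N → ℝ) → ℂ} {x : Fin N → ℝ}
    (hv : DifferentiableAt ℝ v x) (ht : DifferentiableAt ℝ τ x) (hτ : 0 < (τ x).im)
    (h : Good (τ x) (v x)) :
    DifferentiableAt ℝ (fun y => Sp (v y) (τ y)) x ∧
    pdC i (fun y => Sp (v y) (τ y)) x = Spp (v x) (τ x) * pdC i v x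
      + gp (v x) (τ x) / (4 * Real.pi * I) * pdC i τ x := by
  have h1 := (Sp_hasFDerivAt hτ h).restrictScalars ℝ
  have h2 := hv.hasFDerivAt.prodMk ht.hasFDerivAt
  have h3 := HasFDerivAt.comp x h1 h2
  refine ⟨h3.differentiableAt, ?_⟩
  unfold pdC
  have h4 := h3.fderiv
  simp only [Function.comp_def] at h4
  rw [h4]
  simp

lemma pdC_mul {N : ℕ} (i : Fin N) {f g : (Fin N → ℝ) → ℂ} {x : Fin N → ℝ}
    (hf : DifferentiableAt ℝ f x) (hg : DifferentiableAt ℝ g x) :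
    pdC i (fun y => f y * g y) x = pdC i f x * g x + f x * pdC i g x := by
  unfold pdC
  rw [fderiv_fun_mul hf hg]
  simp
  ring

lemma pdC_add {N : ℕ} (i : Fin N) {f g : (Fin N → ℝ) → ℂ} {x : Fin N → ℝ}
    (hf : DifferentiableAt ℝ f x) (hg : DifferentiableAt ℝ g x) :
    pdC i (fun y => f y + g y) x = pdC i f x + pdC i g x := by
  unfold pdC
  rw [fderiv_fun_add hf hg]
  simp

lemma pdC_differentiableAt {N : ℕ} (j : Fin N) {τ : (Fin N → ℝ) → ℂ} {x : Fin N → ℝ}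
    (h : ContDiffAt ℝ 2 τ x) : DifferentiableAt ℝ (pdC j τ) x := by
  have h1 : ContDiffAt ℝ 1 (fderiv ℝ τ) x := h.fderiv_right (by norm_num)
  have h2 := h1.differentiableAt (by norm_num)
  exact h2.clm_apply (differentiableAt_const _)

end GTproof

open GTproof in
/-- S(u(z)) generates conserved densities (equation (cq3)): along solutions of the
elliptic Löwner and Gibbons–Tsarev systems,
∂/∂λ_i [S'(ξ_j)S'(u+ξ_j) ∂τ/∂λ_j] = Γ_{ij} S'(ξ_i)S'(u+ξ_i) ∂τ/∂λ_i
  + Γ_{ji} S'(ξ_j)S'(u+ξ_j) ∂τ/∂λ_j,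
i.e. ∂²S(u)/∂λ_i∂λ_j = Γ_{ij} ∂S(u)/∂λ_i + Γ_{ji} ∂S(u)/∂λ_j. -/
theorem S_generates_conserved_densities
    (N : ℕ) (U : Set (Fin N → ℝ)) (hU : IsOpen U)
    (ξ : Fin N → (Fin N → ℝ) → ℂ) (τ : (Fin N → ℝ) → ℂ)
    (hξC2 : ∀ i, ContDiffOn ℝ 2 (ξ i) U)
    (hτC2 : ContDiffOn ℝ 2 τ U)
    (hup : ∀ x ∈ U, 0 < (τ x).im)
    -- the elliptic Gibbons–Tsarev system
    (hGT1 : ∀ j k : Fin N, j ≠ k → ∀ x ∈ U,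
      pdC j (ξ k) x = 1 / (4 * (Real.pi : ℂ) * Complex.I)
        * (zeta1 (ξ j x - ξ k x) (τ x / 2) - zeta1 (ξ j x) (τ x / 2)) * pdC j τ x)
    (hGT2 : ∀ j k : Fin N, j ≠ k → ∀ x ∈ U,
      pdC k (pdC j τ) x = 1 / (2 * (Real.pi : ℂ) * Complex.I)
        * wp1 (ξ k x - ξ j x) (τ x / 2) * pdC k τ x * pdC j τ x)
    -- nonvanishing of the theta-function values appearing in denominators
    (hnz1 : ∀ i, ∀ x ∈ U, theta1 (ξ i x) (τ x) ≠ 0)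
    (hnz2 : ∀ i, ∀ x ∈ U, theta4 (ξ i x) (τ x) ≠ 0)
    (hnz3 : ∀ i, ∀ x ∈ U, theta1 (ξ i x) (τ x / 2) ≠ 0)
    (hnz4 : ∀ i j : Fin N, i ≠ j → ∀ x ∈ U, theta1 (ξ i x - ξ j x) (τ x) ≠ 0)
    (hnz5 : ∀ i j : Fin N, i ≠ j → ∀ x ∈ U, theta4 (ξ i x - ξ j x) (τ x) ≠ 0)
    (hnz6 : ∀ i j : Fin N, i ≠ j → ∀ x ∈ U, theta1 (ξ i x - ξ j x) (τ x / 2) ≠ 0)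
    (hnzS : ∀ i, ∀ x ∈ U, Sp (ξ i x) (τ x) ≠ 0)
    -- the function u and the elliptic Löwner equations
    (u : (Fin N → ℝ) → ℂ)
    (huC2 : ContDiffOn ℝ 2 u U)
    (hLoewner : ∀ j : Fin N, ∀ x ∈ U,
      4 * (Real.pi : ℂ) * Complex.I * pdC j u x
        = (-zeta1 (u x + ξ j x) (τ x / 2) + zeta1 (ξ j x) (τ x / 2)) * pdC j τ x)
    (hnz7 : ∀ i, ∀ x ∈ U, theta1 (u x + ξ i x) (τ x) ≠ 0)
    (hnz8 : ∀ i, ∀ x ∈ U, theta4 (u x + ξ i x) (τ x) ≠ 0)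
    (hnz9 : ∀ i, ∀ x ∈ U, theta1 (u x + ξ i x) (τ x / 2) ≠ 0) :
    ∀ i j : Fin N, i ≠ j → ∀ x ∈ U,
      pdC i (fun y => Sp (ξ j y) (τ y) * Sp (u y + ξ j y) (τ y) * pdC j τ y) x
        = Gam ξ τ i j x * (Sp (ξ i x) (τ x) * Sp (u x + ξ i x) (τ x) * pdC i τ x)
          + Gam ξ τ j i x * (Sp (ξ j x) (τ x) * Sp (u x + ξ j x) (τ x) * pdC j τ x) := by
  intro i j hij x hx
  have hxU := hU.mem_nhds hx
  have dξ (k) : DifferentiableAt ℝ (ξ k) x := ((hξC2 k).contDiffAt hxU).differentiableAt (by norm_num)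
  have dτ : DifferentiableAt ℝ τ x := (hτC2.contDiffAt hxU).differentiableAt (by norm_num)
  have du : DifferentiableAt ℝ u x := (huC2.contDiffAt hxU).differentiableAt (by norm_num)
  have dp := pdC_differentiableAt j (hτC2.contDiffAt hxU)
  have ht := hup x hx
  have gj : Good (τ x) (ξ j x) := good_of (hnz1 j x hx) (hnz2 j x hx)
  have gi : Good (τ x) (ξ i x) := good_of (hnz1 i x hx) (hnz2 i x hx)
  have gd : Good (τ x) (ξ i x - ξ j x) := good_of (hnz4 i j hij x hx) (hnz5 i j hij x hx)
  have gvj : Good (τ x) (u x + ξ j x) := good_of (hnz7 j x hx) (hnz8 j x hx)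
  have gvi : Good (τ x) (u x + ξ i x) := good_of (hnz7 i x hx) (hnz8 i x hx)
  have e1 : ξ j x + (ξ i x - ξ j x) = ξ i x := by ring
  have e2 : u x + ξ j x + (ξ i x - ξ j x) = u x + ξ i x := by ring
  have s1 := GTproof.star ht gj gd (by rw [e1]; exact gi)
  have s2 := GTproof.star ht gvj gd (by rw [e2]; exact gvi)
  rw [e1] at s1
  rw [e2] at s2
  obtain ⟨d1, D1⟩ := pdC_Sp i (dξ j) dτ ht gj
  obtain ⟨d2, D2⟩ := pdC_Sp i (v := fun y => u y + ξ j y) (du.add (dξ j)) dτ ht gvj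
  rw [pdC_mul i (d1.fun_mul d2) dp, pdC_mul i d1 d2, D1, D2, pdC_add i du (dξ j),
    hGT1 i j hij x hx, hGT2 j i hij.symm x hx]
  have hpi : (Real.pi : ℂ) ≠ 0 := by exact_mod_cast Real.pi_ne_zero
  have hL : pdC i u x = 1 / (4 * (Real.pi : ℂ) * Complex.I) *
      ((-zeta1 (u x + ξ i x) (τ x / 2) + zeta1 (ξ i x) (τ x / 2)) * pdC i τ x) := by
    rw [← hLoewner i x hx]
    field_simp
  rw [hL]
  have hev : Spp (ξ j x - ξ i x) (τ x) = Spp (ξ i x - ξ j x) (τ x) := by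
    rw [← Spp_neg, neg_sub]
  unfold Gam
  rw [hev]
  have hSi := hnzS i x hx
  have hSj := hnzS j x hx
  generalize Sp (ξ i x) (τ x) = Si at *
  generalize Sp (ξ j x) (τ x) = Sj at *
  have hc2 : 1 / (2 * (Real.pi : ℂ) * Complex.I) = 2 * (1 / (4 * (Real.pi : ℂ) * Complex.I)) := by
    field_simp
    norm_num
  have hdiv (z : ℂ) : z / (4 * (Real.pi : ℂ) * Complex.I)
      = z * (1 / (4 * (Real.pi : ℂ) * Complex.I)) := by ring
  rw [hc2, hdiv (gp (ξ j x) (τ x)), hdiv (gp (u x + ξ j x) (τ x))]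
  generalize 1 / (4 * (Real.pi : ℂ) * Complex.I) = c at *
  field_simp
  linear_combination (c * pdC i τ x * pdC j τ x) * (Sp (u x + ξ j x) (τ x) * s1 + Sj * s2)
end

section
/- Conserved densities for semi-Hamiltonian diagonal systems (Section 7): Let U ⊆ ℝ^N be open with coordinates λ₁,…,λ_N. Let φ₁,…,φ_N : U → ℝ be C¹ and Γ_{ij} : U → ℝ (i ≠ j) be functions such that ∂φ_i/∂λ_j = Γ_{ij}(φ_j − φ_i) for all i ≠ j. Let P : U → ℝ be C² and satisfy ∂²P/(∂λ_i∂λ_j) = Γ_{ij} ∂P/∂λ_i + Γ_{ji} ∂P/∂λ_j for all i ≠ j. Then: (a) for all i ≠ j, ∂/∂λ_j (φ_i ∂P/∂λ_i) = ∂/∂λ_i (φ_j ∂P/∂λ_j) on U (so locally there exists A with ∂A/∂λ_i = φ_i ∂P/∂λ_i for all i); (b) if A : U → ℝ is C¹ with ∂A/∂λ_i = φ_i ∂P/∂λ_i for all i, and λ : V → U is a C¹ map on an open set V ⊆ ℝ² with coordinates (t₀, t) satisfying ∂λ_i/∂t = φ_i(λ) ∂λ_i/∂t₀ for all i, then ∂(P∘λ)/∂t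 = ∂(A∘λ)/∂t₀ on V, i.e., P is the density of a conserved quantity. -/
/-- Conserved densities for semi-Hamiltonian diagonal systems of hydrodynamic type
(Section 7): any C² solution `P` of `∂²P/(∂λ_i∂λ_j) = Γ_{ij}∂P/∂λ_i + Γ_{ji}∂P/∂λ_j`
is the density of a conserved quantity. -/
theorem conserved_densities_semiHamiltonian
    (N : ℕ)
    (U : Set (Fin N → ℝ)) (hU : IsOpen U)
    (φ : Fin N → (Fin N → ℝ) → ℝ)
    (hφC1 : ∀ i, ContDiffOn ℝ 1 (φ i) U)
    (Γ : Fin N → Fin N → (Fin N → ℝ) → ℝ)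
    (hΓ : ∀ i j, i ≠ j → ∀ x ∈ U, pd j (φ i) x = Γ i j x * (φ j x - φ i x))
    (P : (Fin N → ℝ) → ℝ)
    (hPC2 : ContDiffOn ℝ 2 P U)
    (hP : ∀ i j, i ≠ j → ∀ x ∈ U,
      pd i (pd j P) x = Γ i j x * pd i P x + Γ j i x * pd j P x) :
    -- (a) the closedness condition: ∂_{λ_j}(φ_i ∂_{λ_i}P) = ∂_{λ_i}(φ_j ∂_{λ_j}P)
    (∀ i j, i ≠ j → ∀ x ∈ U,
      pd j (fun y => φ i y * pd i P y) x = pd i (fun y => φ j y * pd j P y) x)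
    ∧
    -- (b) P is the density of a conserved quantity
    (∀ A : (Fin N → ℝ) → ℝ, ContDiffOn ℝ 1 A U →
      (∀ i, ∀ x ∈ U, pd i A x = φ i x * pd i P x) →
      ∀ V : Set (Fin 2 → ℝ), IsOpen V →
      ∀ lam : (Fin 2 → ℝ) → (Fin N → ℝ), ContDiffOn ℝ 1 lam V → Set.MapsTo lam V U →
      (∀ i, ∀ t ∈ V,
        pd 1 (fun s => lam s i) t = φ i (lam t) * pd 0 (fun s => lam s i) t) →
      ∀ t ∈ V, pd 1 (fun s => P (lam s)) t = pd 0 (fun s => A (lam s)) t) := by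
  have hpd : ∀ i, ∀ x ∈ U, DifferentiableAt ℝ (pd i P) x := by
    intro i x hx
    have h1 : ContDiffAt ℝ 2 P x := hPC2.contDiffAt (hU.mem_nhds hx)
    have h2 : ContDiffAt ℝ 1 (fderiv ℝ P) x := h1.fderiv_right (by norm_num)
    have h3 : DifferentiableAt ℝ (fderiv ℝ P) x := h2.differentiableAt (by norm_num)
    exact h3.clm_apply (differentiableAt_const _)
  have hmul : ∀ i j, ∀ x ∈ U, pd j (fun y => φ i y * pd i P y) x
      = φ i x * pd j (pd i P) x + pd i P x * pd j (φ i) x := by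
    intro i j x hx
    have h1 : DifferentiableAt ℝ (φ i) x :=
      ((hφC1 i).contDiffAt (hU.mem_nhds hx)).differentiableAt (by norm_num)
    have h := (h1.hasFDerivAt.mul (hpd i x hx).hasFDerivAt).fderiv
    have h' : fderiv ℝ (fun y => φ i y * pd i P y) x = _ := h
    unfold pd at h' ⊢
    rw [h']
    simp
  have hchain : ∀ F : (Fin N → ℝ) → ℝ, ∀ lam : (Fin 2 → ℝ) → (Fin N → ℝ), ∀ t, ∀ k,
      DifferentiableAt ℝ F (lam t) → DifferentiableAt ℝ lam t →
      pd k (fun s => F (lam s)) t = ∑ i, pd k (fun s => lam s i) t * pd i F (lam t) := by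
    intro F lam t k hF hl
    have h : fderiv ℝ (fun s => F (lam s)) t = _ := fderiv_comp t hF hl
    have hc : ∀ i, fderiv ℝ (fun s => lam s i) t (Pi.single k 1)
        = fderiv ℝ lam t (Pi.single k 1) i := by
      intro i
      have h2 := (hasFDerivAt_pi'.1 hl.hasFDerivAt i).fderiv
      rw [h2]
      simp
    unfold pd
    rw [h]
    simp only [hc]
    rw [ContinuousLinearMap.comp_apply]
    conv_lhs => rw [pi_eq_sum_univ' (fderiv ℝ lam t (Pi.single k 1))]
    rw [map_sum]
    refine Finset.sum_congr rfl fun i _ => ?_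
    rw [map_smul, smul_eq_mul]
  refine ⟨?_, ?_⟩
  · intro i j hij x hx
    rw [hmul i j x hx, hmul j i x hx, hP i j hij x hx, hP j i hij.symm x hx,
      hΓ i j hij x hx, hΓ j i hij.symm x hx]
    ring
  · intro A hA hAP V hV lam hlam hmaps hsys t ht
    have hl : DifferentiableAt ℝ lam t :=
      (hlam.contDiffAt (hV.mem_nhds ht)).differentiableAt (by norm_num)
    have hU' := hU.mem_nhds (hmaps ht)
    rw [hchain P lam t 1 ((hPC2.contDiffAt hU').differentiableAt (by norm_num)) hl,
      hchain A lam t 0 ((hA.contDiffAt hU').differentiableAt (by norm_num)) hl]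
    refine Finset.sum_congr rfl fun i _ => ?_
    rw [hsys i t ht, hAP i _ (hmaps ht)]
    ring
end
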